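/- arXiv:2403.06270 — 6 statements merged into one kernel-verified Lean document; each statement's English description precedes it below -/
import Mathlib

section
/- Let f_1,…,f_ℓ, g ∈ k⟨x_1,…,x_d⟩. If for every n ≥ 1 and every tuple X ∈ M_n(k)^d with f_1(X) = … = f_ℓ(X) = 0 one also has g(X) = 0, then for every n ≥ 1 there exists r ≥ 1 such that g^r lies in the sum of the two-sided ideal of k⟨x_1,…,x_d⟩ generated by f_1,…,f_ℓ and the ideal PI_n of all polynomial identities of n×n matrices. -/
/-- Evaluation of a noncommutative polynomial `f ∈ k⟨x_1,…,x_d⟩` at a tuple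
`X` of `n × n` matrices: the image of `f` under the unique unital `k`-algebra
homomorphism sending `x_i` to `X i`. -/
noncomputable def ncEval {k : Type*} [CommSemiring k] {d n : ℕ}
    (X : Fin d → Matrix (Fin n) (Fin n) k) (f : FreeAlgebra k (Fin d)) :
    Matrix (Fin n) (Fin n) k :=
  FreeAlgebra.lift k X f

namespace AmitsurAux

open Module

universe u

/-- The standard polynomial of degree `N`. -/
noncomputable def stdPoly {A : Type*} [Ring A] {N : ℕ} (a : Fin N → A) : A :=
  ∑ σ : Equiv.Perm (Fin N), Equiv.Perm.sign σ • (List.ofFn fun i => a (σ i)).prod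

theorem stdPoly_eq_alt (k : Type*) [CommRing k] {A : Type*} [Ring A] [Algebra k A] {N : ℕ}
    (a : Fin N → A) :
    stdPoly a = MultilinearMap.alternatization (MultilinearMap.mkPiAlgebraFin k N A) a := by
  simp [stdPoly, MultilinearMap.alternatization_apply]

theorem stdPoly_map {A B : Type*} [Ring A] [Ring B] (φ : A →+* B) {N : ℕ} (a : Fin N → A) :
    φ (stdPoly a) = stdPoly fun i => φ (a i) := by
  unfold stdPoly
  rw [map_sum]
  refine Finset.sum_congr rfl fun σ _ => ?_
  rw [Units.smul_def, Units.smul_def, map_zsmul, map_list_prod, List.map_ofFn]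
  rfl

theorem stdPoly_eq_zero_of_finrank (k : Type*) [Field k] {A : Type*} [Ring A] [Algebra k A]
    [Module.Finite k A] {N : ℕ} (hN : finrank k A < N) (a : Fin N → A) : stdPoly a = 0 := by
  rw [stdPoly_eq_alt k]
  apply AlternatingMap.map_linearDependent
  intro h
  have := h.fintype_card_le_finrank
  simp at this
  omega

theorem multilinear_vanish_span {K A B : Type*} [CommRing K] [AddCommGroup A] [Module K A]
    [AddCommGroup B] [Module K B] {N : ℕ}
    (F : MultilinearMap K (fun _ : Fin N => A) B) (s : Set A)
    (h : ∀ a : Fin N → A, (∀ i, a i ∈ s) → F a = 0)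
    (a : Fin N → A) (ha : ∀ i, a i ∈ Submodule.span K s) : F a = 0 := by
  classical
  have key : ∀ T : Finset (Fin N), ∀ a : Fin N → A, (∀ i ∈ T, a i ∈ Submodule.span K s) →
      (∀ i ∉ T, a i ∈ s) → F a = 0 := by
    intro T
    induction T using Finset.induction_on with
    | empty => intro a _ h2; exact h a fun i => h2 i (by simp)
    | insert j T hj ih =>
      intro a h1 h2
      have h3 : ∀ x ∈ Submodule.span K s, F (Function.update a j x) = 0 := by
        intro x hx
        induction hx using Submodule.span_induction with
        | mem x hx =>
          apply ih
          · intro i hi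
            have : i ≠ j := by rintro rfl; exact hj hi
            rw [Function.update_of_ne this]
            exact h1 i (by simp [hi])
          · intro i hi
            by_cases hij : i = j
            · subst hij; simpa using hx
            · rw [Function.update_of_ne hij]
              exact h2 i (by simp [hi, hij])
        | zero => exact F.map_update_zero a j
        | add x y _ _ hx hy => rw [F.map_update_add, hx, hy, add_zero]
        | smul c x _ hx => rw [F.map_update_smul, hx, smul_zero]
      have := h3 (a j) (h1 j (by simp))
      rwa [Function.update_eq_self] at this
  exact key Finset.univ a (fun i _ => ha i) (by simp)

theorem stdPoly_vanish_span (K : Type*) [CommRing K] {A : Type*} [Ring A] [Algebra K A] {N : ℕ}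
    (s : Set A) (h : ∀ a : Fin N → A, (∀ i, a i ∈ s) → stdPoly a = 0)
    (a : Fin N → A) (ha : ∀ i, a i ∈ Submodule.span K s) : stdPoly a = 0 := by
  rw [stdPoly_eq_alt K]
  refine multilinear_vanish_span
    (MultilinearMap.alternatization (MultilinearMap.mkPiAlgebraFin K N A)).toMultilinearMap
    s (fun a ha => ?_) a ha
  have := h a ha
  rw [stdPoly_eq_alt K] at this
  exact this

theorem shift_prod {K M : Type*} [Ring K] [AddCommGroup M] [Module K M] {N : ℕ}
    (w : ℕ → M) (r : Fin N → Module.End K M)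
    (hr : ∀ (i : Fin N) (j : ℕ), j ≤ N → r i (w j) = if j = i + 1 then w i else 0)
    (l : List (Fin N)) : ∀ c : ℕ, l.length + c ≤ N → (l.map r).prod (w (l.length + c)) =
      if l.map Fin.val = List.range' c l.length then w c else 0 := by
  induction l with
  | nil => intro c _; simp
  | cons i l ih =>
    intro c hc
    have h1 := ih (c + 1) (by simp at hc; omega)
    simp only [List.map_cons, List.prod_cons, List.length_cons, List.range'_succ,
      Module.End.mul_apply]
    simp only [List.length_cons] at hc
    rw [show l.length + 1 + c = l.length + (c + 1) by omega, h1]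
    by_cases hl : List.map Fin.val l = List.range' (c + 1) l.length
    · rw [if_pos hl, hr i _ (by omega)]
      by_cases hi : c = i
      · rw [if_pos (by omega), if_pos (by rw [hl, hi]), hi]
      · simp only [List.cons.injEq]
        rw [if_neg (by omega), if_neg (by intro h; exact hi h.1.symm)]
    · rw [if_neg hl, map_zero, if_neg]
      simp [hl]

theorem stdPoly_shift {K M : Type*} [Ring K] [AddCommGroup M] [Module K M] {N : ℕ}
    (w : ℕ → M) (r : Fin N → Module.End K M)
    (hr : ∀ (i : Fin N) (j : ℕ), j ≤ N → r i (w j) = if j = i + 1 then w i else 0) :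
    stdPoly r (w N) = w 0 := by
  have h1 : ∀ σ : Equiv.Perm (Fin N), (List.ofFn fun i => r (σ i)).prod (w N) =
      if σ = 1 then w 0 else 0 := by
    intro σ
    have := shift_prod w r hr (List.ofFn σ) 0 (by simp)
    simp only [List.length_ofFn, List.map_ofFn, add_zero] at this
    change (List.ofFn (r ∘ σ)).prod (w N) = _
    rw [this]
    congr 1
    rw [eq_iff_iff]
    constructor
    · intro h
      ext i
      have := congrArg (fun l => l[(i : ℕ)]?) h
      simpa using this
    · rintro rfl
      apply List.ext_getElem
      · simp
      · simp
  unfold stdPoly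
  rw [LinearMap.sum_apply, Finset.sum_eq_single 1]
  · simp only [Equiv.Perm.sign_one, one_smul]
    rw [h1, if_pos rfl]
  · intro σ _ hσ
    rw [Units.smul_def, LinearMap.smul_apply, h1, if_neg hσ, smul_zero]
  · simp

theorem exists_max_comm (D : Type*) [Ring D] :
    ∃ S : Set D, S = S.centralizer := by
  obtain ⟨S, hS⟩ := zorn_subset {S : Set D | S ⊆ S.centralizer} (by
    intro c hc hchain
    refine ⟨⋃₀ c, ?_, fun s hs => Set.subset_sUnion_of_mem hs⟩
    rintro x ⟨s, hs, hx⟩ y ⟨t, ht, hy⟩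
    rcases hchain.total hs ht with h | h
    · exact hc ht (h hx) y hy
    · exact hc hs hx y (h hy))
  refine ⟨S, Set.Subset.antisymm hS.prop fun x hx => ?_⟩
  have : insert x S ⊆ (insert x S).centralizer := by
    rintro y (rfl | hy) z (rfl | hz)
    · rfl
    · exact hx z hz
    · exact (hx y hy).symm
    · exact hS.prop hy z hz
  exact hS.le_of_ge this (Set.subset_insert x S) (Set.mem_insert x S)

theorem exists_big_field (B : Type*) (M : Type u) [Ring B] [AddCommGroup M] [Module B M]
    [IsSimpleModule B M] :
    ∃ (K : Type u) (_ : Field K) (_ : Module K M) (_ : SMulCommClass B K M),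
      (∀ φ : Module.End B M, (∀ (c : K) (m : M), φ (c • m) = c • φ m) →
        ∃ c : K, ∀ m, φ m = c • m) ∧
      ∀ z : B, (∀ b, z * b = b * z) → ∃ c : K, ∀ m : M, c • m = z • m := by
  classical
  obtain ⟨S, hS⟩ := exists_max_comm (Module.End B M)
  let K := Subring.centralizer S
  have hmem : ∀ x : Module.End B M, x ∈ K ↔ x ∈ S := fun x => by
    rw [Subring.mem_centralizer_iff]
    conv_rhs => rw [hS]
    rfl
  have hcomm : ∀ x y : K, x * y = y * x := by
    intro x y
    apply Subtype.ext
    exact (Subring.mem_centralizer_iff.1 y.2 x ((hmem x).1 x.2))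
  let cr : CommRing K := { (inferInstance : Ring K) with mul_comm := hcomm }
  have hinv : ∀ x : Module.End B M, x ≠ 0 → ∃ y : Module.End B M, x * y = 1 ∧ y * x = 1 := by
    intro x hx
    exact ⟨x⁻¹, mul_inv_cancel₀ hx, inv_mul_cancel₀ hx⟩
  have hfield : IsField K := by
    refine ⟨⟨0, 1, zero_ne_one⟩, hcomm, ?_⟩
    intro a ha
    obtain ⟨y, h1, h2⟩ := hinv a (fun h => ha (Subtype.ext h))
    refine ⟨⟨y, ?_⟩, Subtype.ext h1⟩
    rw [Subring.mem_centralizer_iff]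
    intro g hg
    have h3 := Subring.mem_centralizer_iff.1 a.2 g hg
    calc g * y = (y * a) * g * y := by rw [h2, one_mul]
      _ = y * (g * a) * y := by rw [h3]; simp only [mul_assoc]
      _ = y * g * (a * y) := by simp only [mul_assoc]
      _ = y * g := by rw [h1, mul_one]
  let fld : Field K := hfield.toField
  let md : Module K M := Module.compHom M K.subtype
  have hsm : ∀ (c : K) (m : M), c • m = (c : Module.End B M) m := fun _ _ => rfl
  refine ⟨K, fld, md, ⟨fun b c m => ?_⟩, ?_, ?_⟩
  · rw [hsm, hsm, map_smul]
  · intro φ hφ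
    refine ⟨⟨φ, ?_⟩, fun m => rfl⟩
    rw [Subring.mem_centralizer_iff]
    intro g hg
    ext m
    exact (hφ ⟨g, (hmem g).2 hg⟩ m).symm
  · intro z hz
    let ζ : Module.End B M :=
      { toFun := fun m => z • m
        map_add' := smul_add z
        map_smul' := fun b m => by simp [smul_smul, hz] }
    have hζ : ∀ m, ζ m = z • m := fun _ => rfl
    refine ⟨⟨ζ, ?_⟩, fun m => rfl⟩
    rw [Subring.mem_centralizer_iff]
    intro g hg
    ext m
    simp [hζ]

theorem finite_of_stdPoly {K B M : Type*} [Field K] [Ring B] [AddCommGroup M] [Module K M]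
    [Module B M] [SMulCommClass B K M] [IsSimpleModule B M]
    (hmax : ∀ φ : Module.End B M, (∀ (c : K) (m : M), φ (c • m) = c • φ m) →
        ∃ c : K, ∀ m, φ m = c • m)
    (s : Set (Module.End K M)) {N : ℕ}
    (hs : ∀ a : Fin N → Module.End K M, (∀ i, a i ∈ s) → stdPoly a = 0)
    (hB : ∀ b : B, Module.toModuleEnd K M b ∈ Submodule.span K s) :
    Module.Finite K M := by
  classical
  have := IsSimpleModule.nontrivial B M
  let β : B →+* Module.End K M := Module.toModuleEnd K M
  have hβ : ∀ b m, β b m = b • m := fun _ _ => rfl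
  let R := Algebra.adjoin K (Set.range β)
  have hR : ∀ r ∈ R, r ∈ Submodule.span K s := by
    intro r hr
    have h1 : r ∈ Subalgebra.toSubmodule R := hr
    have h2 : Submonoid.closure (Set.range β) = MonoidHom.mrange (β : B →* Module.End K M) := by
      have : Set.range β = (MonoidHom.mrange (β : B →* Module.End K M) : Set _) := by
        ext; simp
      rw [this, Submonoid.closure_eq]
    rw [Algebra.adjoin_eq_span, h2] at h1
    refine Submodule.span_le.2 ?_ h1
    rintro _ ⟨b, rfl⟩
    exact hB b
  have hsimple : IsSimpleModule R M := by
    rw [isSimpleModule_iff_toSpanSingleton_surjective]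
    refine ⟨inferInstance, fun m hm y => ?_⟩
    obtain ⟨b, hb⟩ := IsSimpleModule.toSpanSingleton_surjective B hm y
    exact ⟨⟨β b, Algebra.subset_adjoin ⟨b, rfl⟩⟩, hb⟩
  have hdens : ∀ (h : Module.End K M) (t : Finset M), ∃ r ∈ R, ∀ m ∈ t, h m = r m := by
    intro h t
    obtain ⟨r, hr⟩ := jacobson_density (R := R) (M := M)
      { toFun := h
        map_add' := map_add h
        map_smul' := by
          intro φ m
          let φ' : Module.End B M :=
            { toFun := φ
              map_add' := map_add φ
              map_smul' := fun b m =>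
                map_smul φ (⟨β b, Algebra.subset_adjoin ⟨b, rfl⟩⟩ : R) m }
          obtain ⟨c, hc⟩ := hmax φ' (by
            intro c m
            exact map_smul φ (algebraMap K R c) m)
          have hc' : ∀ m, φ m = c • m := hc
          change h (φ m) = φ (h m)
          rw [hc', hc', map_smul] } t
    exact ⟨r, r.2, hr⟩
  by_contra hfin
  let b := Basis.ofVectorSpace K M
  have hinf : Infinite (Basis.ofVectorSpaceIndex K M) := by
    by_contra h
    rw [not_infinite_iff_finite] at h
    exact hfin (Module.Finite.of_basis b)
  let e := Infinite.natEmbedding (Basis.ofVectorSpaceIndex K M)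
  let w : ℕ → M := fun n => b (e n)
  let t : Finset M := (Finset.range (N + 1)).image w
  choose r hrR hr using fun i : Fin N => hdens
    (b.constr K fun j => if j = e (i + 1) then b (e i) else 0) t
  have h0 : stdPoly r = 0 := stdPoly_vanish_span K s hs r fun i => hR _ (hrR i)
  have h1 := stdPoly_shift w r (by
    intro i j hj
    rw [← hr i (w j) (Finset.mem_image_of_mem w (by simp; omega))]
    simp only [w, Basis.constr_basis, e.injective.eq_iff])
  rw [h0] at h1
  exact b.ne_zero (e 0) h1.symm

open Polynomial in
theorem not_isUnit_aux {A : Type*} [Ring A] (g : A) (hg : ¬ IsNilpotent g) :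
    Ideal.span {(1 - C g * X : A[X])} ≠ ⊤ := by
  intro h
  rw [Ideal.eq_top_iff_one, Ideal.mem_span_singleton'] at h
  obtain ⟨p, hp⟩ := h
  have hp' : p - p * C g * X = 1 := by rw [← hp, mul_sub, mul_one, mul_assoc]
  have key : ∀ i, p.coeff i = g ^ i := by
    intro i
    induction i with
    | zero =>
      have := congrArg (fun q => q.coeff 0) hp'
      simpa using this
    | succ i ih =>
      have := congrArg (fun q => q.coeff (i + 1)) hp'
      simp only [coeff_sub, coeff_mul_X, coeff_mul_C, coeff_one] at this
      rw [if_neg (by omega), sub_eq_zero] at this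
      rw [this, ih, pow_succ]
  exact hg ⟨p.natDegree + 1, by rw [← key, coeff_eq_zero_of_natDegree_lt (by omega)]⟩

open Polynomial in
theorem exists_rep_mod (k : Type*) [Field k] (A : Type*) [Ring A] [Algebra k A] {N : ℕ}
    (hS : ∀ a : Fin N → A, stdPoly a = 0) (g : A) (M : Type u) [AddCommGroup M] [Module A[X] M]
    [IsSimpleModule A[X] M] (m1 : M) (hm1 : m1 ≠ 0)
    (hgm : (C g : A[X]) • (X : A[X]) • m1 = m1) :
    ∃ (K : Type u) (_ : Field K) (_ : Algebra k K) (m : ℕ)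
      (ρ : A →ₐ[k] Matrix (Fin m) (Fin m) K) (T : Matrix (Fin m) (Fin m) K) (v : Fin m → K),
      v ≠ 0 ∧ (ρ g).mulVec (T.mulVec v) = v := by
  obtain ⟨K, _, _, _, hmax, hcen⟩ := exists_big_field A[X] M
  let β : A[X] →+* Module.End K M := Module.toModuleEnd K M
  have hβ : ∀ b m, β b m = b • m := fun _ _ => rfl
  obtain ⟨cX, hcX⟩ := hcen X (fun b => X_mul)
  have hfin : Module.Finite K M := by
    refine finite_of_stdPoly hmax (Set.range fun a => β (C a)) (N := N) ?_ ?_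
    · intro a ha
      choose a' ha' using ha
      obtain rfl : (fun i => β (C (a' i))) = a := funext ha'
      have := stdPoly_map (β.comp C) a'
      rw [hS, map_zero] at this
      exact this.symm
    · intro b
      change β b ∈ _
      induction b using Polynomial.induction_on' with
      | add p q hp hq => rw [map_add]; exact add_mem hp hq
      | monomial n a =>
        have : β (monomial n a) = cX ^ n • β (C a) := by
          have h1 : β X = algebraMap K (Module.End K M) cX := by
            ext m
            exact (hcX m).symm
          rw [← C_mul_X_pow_eq_monomial, map_mul, map_pow, h1, ← map_pow, Algebra.smul_def,
            Algebra.commutes]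
        rw [this]
        exact Submodule.smul_mem _ _ (Submodule.subset_span ⟨a, rfl⟩)
  choose χ hχ using fun c : k => hcen (C (algebraMap k A c)) (fun b => by
    rw [← Polynomial.algebraMap_apply, Algebra.commutes])
  have hinj : ∀ c c' : K, c • m1 = c' • m1 → c = c' := fun c c' h => smul_left_injective K hm1 h
  let χ' : k →+* K :=
    { toFun := χ
      map_one' := hinj _ _ (by rw [hχ, map_one, map_one, one_smul, one_smul])
      map_zero' := hinj _ _ (by rw [hχ, map_zero, map_zero, zero_smul, zero_smul])
      map_add' := fun a b => hinj _ _ (by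
        rw [hχ, add_smul, hχ, hχ, ← add_smul, ← map_add, ← map_add])
      map_mul' := fun a b => hinj _ _ (by
        rw [hχ, mul_smul, hχ, hχ, ← mul_smul, ← map_mul, ← map_mul]) }
  let algK : Algebra k K := χ'.toAlgebra
  have hχ' : ∀ (c : k) (m : M), algebraMap k K c • m = (C (algebraMap k A c) : A[X]) • m := hχ
  let b := Module.finBasis K M
  let E := LinearMap.toMatrixAlgEquiv b
  let ρ : A →ₐ[k] Matrix (Fin (finrank K M)) (Fin (finrank K M)) K :=
    { (E : Module.End K M →+* _).comp (β.comp C) with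
      commutes' := by
        intro c
        have h1 : β (C (algebraMap k A c)) =
            algebraMap K (Module.End K M) (algebraMap k K c) := by
          ext m
          exact (hχ' c m).symm
        change E (β (C (algebraMap k A c))) = _
        rw [h1, AlgEquiv.commutes, ← IsScalarTower.algebraMap_apply] }
  have hE : ∀ (h : Module.End K M) (m : M), (E h).mulVec (b.repr m) = b.repr (h m) :=
    fun h m => LinearMap.toMatrix_mulVec_repr b b h m
  refine ⟨K, inferInstance, algK, finrank K M, ρ, E (β X), b.repr m1, ?_, ?_⟩
  · intro h
    apply hm1
    apply b.repr.injective
    ext i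
    simpa using congrFun h i
  · change (E (β (C g))).mulVec _ = _
    rw [hE, hE, hβ, hβ, hgm]

open Polynomial in
theorem exists_rep (k : Type*) [Field k] (A : Type u) [Ring A] [Algebra k A] {N : ℕ}
    (hS : ∀ a : Fin N → A, stdPoly a = 0) (g : A) (hg : ¬ IsNilpotent g) :
    ∃ (K : Type u) (_ : Field K) (_ : Algebra k K) (m : ℕ)
      (ρ : A →ₐ[k] Matrix (Fin m) (Fin m) K) (T : Matrix (Fin m) (Fin m) K) (v : Fin m → K),
      v ≠ 0 ∧ (ρ g).mulVec (T.mulVec v) = v := by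
  obtain ⟨L, hL, hle⟩ := Ideal.exists_le_maximal _ (not_isUnit_aux g hg)
  let M := A[X] ⧸ L
  have hsimple : IsSimpleModule A[X] M := isSimpleModule_iff_isCoatom.2 hL.out
  let m1 : M := Submodule.Quotient.mk 1
  have hm1 : m1 ≠ 0 := by
    intro h
    rw [Submodule.Quotient.mk_eq_zero] at h
    exact hL.ne_top ((Ideal.eq_top_iff_one L).2 h)
  have hgm : (C g : A[X]) • (X : A[X]) • m1 = m1 := by
    have h1 : (1 - C g * X : A[X]) ∈ L := hle (Ideal.subset_span rfl)
    have h2 : (1 - C g * X : A[X]) • m1 = 0 := by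
      rw [← Submodule.Quotient.mk_smul, Submodule.Quotient.mk_eq_zero]
      simpa using h1
    rw [sub_smul, one_smul, sub_eq_zero, mul_smul] at h2
    exact h2.symm
  exact exists_rep_mod k A hS g M m1 hm1 hgm

theorem exists_point {k : Type*} [Field k] [IsAlgClosed k] {K : Type*} [Field K] [Algebra k K]
    (s : Set K) (hs : s.Finite) :
    Nonempty (Algebra.adjoin k s →ₐ[k] k) := by
  have hft : Algebra.FiniteType k (Algebra.adjoin k s) :=
    (Subalgebra.fg_iff_finiteType _).1 ⟨hs.toFinset, by simp⟩
  obtain ⟨m, hm⟩ := Ideal.exists_maximal (Algebra.adjoin k s)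
  let := Ideal.Quotient.field m
  have := finite_of_finite_type_of_isJacobsonRing k (Algebra.adjoin k s ⧸ m)
  have hb := IsAlgClosed.algebraMap_bijective_of_isIntegral (k := k)
    (K := Algebra.adjoin k s ⧸ m)
  let e := AlgEquiv.ofBijective (Algebra.ofId k (Algebra.adjoin k s ⧸ m)) hb
  exact ⟨(e.symm : _ →ₐ[k] k).comp (Ideal.Quotient.mkₐ k m)⟩

theorem no_rep {k : Type*} [Field k] [IsAlgClosed k] {d ℓ : ℕ}
    (f : Fin ℓ → FreeAlgebra k (Fin d)) (g : FreeAlgebra k (Fin d))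
    (hzero : ∀ (n : ℕ), 1 ≤ n → ∀ X : Fin d → Matrix (Fin n) (Fin n) k,
        (∀ j, ncEval X (f j) = 0) → ncEval X g = 0)
    {K : Type*} [Field K] [Algebra k K] {m : ℕ}
    (ρ : FreeAlgebra k (Fin d) →ₐ[k] Matrix (Fin m) (Fin m) K)
    (T : Matrix (Fin m) (Fin m) K) (v : Fin m → K) (hv : v ≠ 0)
    (hρ : ∀ j, ρ (f j) = 0) (hg : (ρ g).mulVec (T.mulVec v) = v) : False := by
  obtain ⟨i0, hi0⟩ := Function.ne_iff.1 hv
  let x : Fin d → Matrix (Fin m) (Fin m) K := fun i => ρ (FreeAlgebra.ι k i)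
  let s : Set K := (Set.range fun q : Fin d × Fin m × Fin m => x q.1 q.2.1 q.2.2) ∪
    (Set.range fun q : Fin m × Fin m => T q.1 q.2) ∪ Set.range v ∪ {(v i0)⁻¹}
  have hs : s.Finite :=
    (((Set.finite_range _).union (Set.finite_range _)).union (Set.finite_range _)).union
      (Set.finite_singleton _)
  obtain ⟨ψ⟩ := exists_point (k := k) s hs
  let R := Algebra.adjoin k s
  have hsub : s ⊆ R := Algebra.subset_adjoin
  let x' : Fin d → Matrix (Fin m) (Fin m) R := fun i => Matrix.of fun a b =>
    ⟨x i a b, hsub (Or.inl (Or.inl (Or.inl ⟨(i, a, b), rfl⟩)))⟩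
  let T' : Matrix (Fin m) (Fin m) R := Matrix.of fun a b =>
    ⟨T a b, hsub (Or.inl (Or.inl (Or.inr ⟨(a, b), rfl⟩)))⟩
  let v' : Fin m → R := fun a => ⟨v a, hsub (Or.inl (Or.inr ⟨a, rfl⟩))⟩
  let u : R := ⟨(v i0)⁻¹, hsub (Or.inr rfl)⟩
  let ρ' : FreeAlgebra k (Fin d) →ₐ[k] Matrix (Fin m) (Fin m) R := FreeAlgebra.lift k x'
  have hcomp : R.val.mapMatrix.comp ρ' = ρ := by
    apply FreeAlgebra.hom_ext
    funext i
    simp only [Function.comp_apply, AlgHom.comp_apply, ρ', FreeAlgebra.lift_ι_apply]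
    rfl
  have hcomp' : ∀ p, (ρ' p).map R.val = ρ p := fun p => by rw [← hcomp]; rfl
  have hfj : ∀ j, ρ' (f j) = 0 := by
    intro j
    have := hcomp' (f j)
    rw [hρ] at this
    ext a b
    exact congrFun (congrFun this a) b
  have hgv : (ρ' g).mulVec (T'.mulVec v') = v' := by
    funext a
    apply Subtype.ext
    have h1 : ∀ (Q : Matrix (Fin m) (Fin m) R) (y : Fin m → R) (a : Fin m),
        R.val (Q.mulVec y a) = (Q.map R.val).mulVec (fun c => R.val (y c)) a := by
      intro Q y a
      simp [Matrix.mulVec, dotProduct]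
    have h2 := h1 (ρ' g) (T'.mulVec v') a
    rw [hcomp', show (fun c => R.val (T'.mulVec v' c)) = T.mulVec v from
      funext fun c => h1 T' v' c, hg] at h2
    exact h2
  have hm : 1 ≤ m := by
    have := i0.2
    omega
  have hψg : ncEval (fun i => ψ.mapMatrix (x' i)) g = 0 := by
    have h1 : ∀ p, ncEval (fun i => ψ.mapMatrix (x' i)) p = ψ.mapMatrix (ρ' p) := by
      intro p
      unfold ncEval
      have : FreeAlgebra.lift k (fun i => ψ.mapMatrix (x' i)) = ψ.mapMatrix.comp ρ' := by
        apply FreeAlgebra.hom_ext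
        funext i
        simp only [Function.comp_apply, AlgHom.comp_apply, ρ', FreeAlgebra.lift_ι_apply]
      rw [this]
      rfl
    apply hzero m hm
    intro j
    rw [h1, hfj, map_zero]
  have hψg' : (ρ' g).map ψ = 0 := by
    have : FreeAlgebra.lift k (fun i => ψ.mapMatrix (x' i)) = ψ.mapMatrix.comp ρ' := by
      apply FreeAlgebra.hom_ext
      funext i
      simp only [Function.comp_apply, AlgHom.comp_apply, ρ', FreeAlgebra.lift_ι_apply]
    unfold ncEval at hψg
    rw [this] at hψg
    exact hψg
  have hv0 : ψ (v' i0) = 0 := by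
    have h3 := congrArg ψ (congrFun hgv i0)
    rw [← h3]
    simp only [Matrix.mulVec, dotProduct, map_sum, map_mul]
    refine Finset.sum_eq_zero fun j _ => ?_
    have h4 : ψ (ρ' g i0 j) = 0 := congrFun (congrFun hψg' i0) j
    rw [h4, zero_mul]
  have huv : u * v' i0 = 1 := Subtype.ext (inv_mul_cancel₀ hi0)
  have := congrArg ψ huv
  rw [map_mul, hv0, mul_zero, map_one] at this
  exact zero_ne_one this

end AmitsurAux

/-- Amitsur's Nullstellensatz: if `g` vanishes on the common matricial zero set of
`f_1, …, f_ℓ`, then for every `n ≥ 1` some power `g^r` lies in the sum of the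
two-sided ideal generated by `f_1, …, f_ℓ` and the ideal `PI_n` of polynomial
identities of `n × n` matrices. -/
theorem amitsur_nullstellensatz
    (k : Type*) [Field k] [IsAlgClosed k] [CharZero k]
    (d ℓ : ℕ) (f : Fin ℓ → FreeAlgebra k (Fin d)) (g : FreeAlgebra k (Fin d))
    (hzero : ∀ (n : ℕ), 1 ≤ n → ∀ X : Fin d → Matrix (Fin n) (Fin n) k,
        (∀ j, ncEval X (f j) = 0) → ncEval X g = 0) :
    ∀ (n : ℕ), 1 ≤ n → ∃ r : ℕ, 1 ≤ r ∧
      ∃ p q : FreeAlgebra k (Fin d),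
        p ∈ TwoSidedIdeal.span (Set.range f) ∧
        (∀ X : Fin d → Matrix (Fin n) (Fin n) k, ncEval X q = 0) ∧
        g ^ r = p + q := by
  intro n hn
  let PI : TwoSidedIdeal (FreeAlgebra k (Fin d)) :=
    TwoSidedIdeal.mk' {q | ∀ X : Fin d → Matrix (Fin n) (Fin n) k, ncEval X q = 0}
      (fun X => by simp [ncEval])
      (fun {a b} ha hb X => by
        have h1 := ha X
        have h2 := hb X
        simp only [ncEval] at h1 h2 ⊢
        rw [map_add, h1, h2, add_zero])
      (fun {a} ha X => by
        have h1 := ha X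
        simp only [ncEval] at h1 ⊢
        rw [map_neg, h1, neg_zero])
      (fun {a b} hb X => by
        have h1 := hb X
        simp only [ncEval] at h1 ⊢
        rw [map_mul, h1, mul_zero])
      (fun {a b} ha X => by
        have h1 := ha X
        simp only [ncEval] at h1 ⊢
        rw [map_mul, h1, zero_mul])
  have hPI : ∀ q, q ∈ PI ↔ ∀ X : Fin d → Matrix (Fin n) (Fin n) k, ncEval X q = 0 :=
    fun q => TwoSidedIdeal.mem_mk' _ _ _ _ _ _ q
  let J := TwoSidedIdeal.span (Set.range f) ⊔ PI
  let π : FreeAlgebra k (Fin d) →ₐ[k] J.ringCon.Quotient := J.ringCon.mkₐ k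
  have hπs : Function.Surjective π := RingCon.mkₐ_surjective _
  have hπ : ∀ x, π x = 0 ↔ x ∈ J := by
    intro x
    rw [TwoSidedIdeal.mem_iff]
    exact RingCon.eq J.ringCon
  have hS : ∀ a : Fin (n * n + 1) → J.ringCon.Quotient, AmitsurAux.stdPoly a = 0 := by
    intro a
    choose a' ha' using fun i => hπs (a i)
    obtain rfl : (fun i => π (a' i)) = a := funext ha'
    have h1 := AmitsurAux.stdPoly_map (π : _ →+* J.ringCon.Quotient) a'
    refine h1.symm.trans ((hπ _).2 (TwoSidedIdeal.mem_sup_right ((hPI _).2 fun X => ?_)))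
    have h2 := AmitsurAux.stdPoly_map
      ((FreeAlgebra.lift k X).toRingHom) a'
    refine h2.trans (AmitsurAux.stdPoly_eq_zero_of_finrank k ?_ _)
    simp [Module.finrank_matrix]
  have hnil : IsNilpotent (π g) := by
    by_contra hng
    obtain ⟨K, _, _, m, ρ, T, v, hv, hgv⟩ := AmitsurAux.exists_rep k _ hS (π g) hng
    refine AmitsurAux.no_rep f g hzero (ρ.comp π) T v hv (fun j => ?_) hgv
    have : π (f j) = 0 :=
      (hπ _).2 (TwoSidedIdeal.mem_sup_left (TwoSidedIdeal.subset_span ⟨j, rfl⟩))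
    rw [AlgHom.comp_apply, this, map_zero]
  obtain ⟨r, hr⟩ := hnil
  have h1 : g ^ (r + 1) ∈ J := by
    rw [← hπ, map_pow, pow_succ, hr, zero_mul]
  obtain ⟨p, hp, q, hq, hpq⟩ := TwoSidedIdeal.mem_sup.1 h1
  exact ⟨r + 1, by omega, p, q, hp, (hPI q).1 hq, hpq.symm⟩
end

section
/- Let f_1,…,f_ℓ ∈ k⟨x_1,…,x_d⟩ be homogeneous (each f_j a k-linear combination of words of a single fixed length depending on j), and let g ∈ k⟨x_1,…,x_d⟩. Then the following are equivalent: (i) for every n ≥ 1 and every X ∈ M_n(k)^d, f_1(X) = … = f_ℓ(X) = 0 implies g(X) = 0; (ii) g belongs to the two-sided ideal of k⟨x_1,…,x_d⟩ generated by f_1,…,f_ℓ. -/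
/-- `f ∈ k⟨x_1,…,x_d⟩` is homogeneous of degree `m` if it is a `k`-linear
combination of words of length `m` in the generators. -/
def IsNcHomogeneous {k : Type*} [CommSemiring k] {d : ℕ}
    (m : ℕ) (f : FreeAlgebra k (Fin d)) : Prop :=
  f ∈ Submodule.span k
    {w : FreeAlgebra k (Fin d) |
      ∃ l : List (Fin d), l.length = m ∧ w = (l.map (FreeAlgebra.ι k)).prod}

open Polynomial in
/-- The grading homomorphism `x_i ↦ x_i t`. -/
noncomputable def ncPhi (k : Type*) [Field k] (d : ℕ) :
    FreeAlgebra k (Fin d) →ₐ[k] (FreeAlgebra k (Fin d))[X] :=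
  FreeAlgebra.lift k (fun i => Polynomial.monomial 1 (FreeAlgebra.ι k i))

theorem ncPhi_word (k : Type*) [Field k] (d : ℕ) (l : List (Fin d)) :
    ncPhi k d (l.map (FreeAlgebra.ι k)).prod
      = Polynomial.monomial l.length (l.map (FreeAlgebra.ι k)).prod := by
  induction l with
  | nil => simp
  | cons a l ih =>
    rw [List.map_cons, List.prod_cons, map_mul, ih]
    simp only [ncPhi, FreeAlgebra.lift_ι_apply, Polynomial.monomial_mul_monomial,
      List.length_cons, Nat.add_comm]

theorem ncPhi_hom (k : Type*) [Field k] (d m : ℕ) (f : FreeAlgebra k (Fin d))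
    (hf : IsNcHomogeneous m f) : ncPhi k d f = Polynomial.monomial m f := by
  unfold IsNcHomogeneous at hf
  induction hf using Submodule.span_induction with
  | mem x h =>
    obtain ⟨l, rfl, rfl⟩ := h
    exact ncPhi_word k d l
  | zero => simp
  | add x y _ _ hx hy => rw [map_add, hx, hy, map_add]
  | smul a x _ hx => rw [map_smul, hx, Polynomial.smul_monomial]

theorem ncPhi_sum (k : Type*) [Field k] (d : ℕ) (a : FreeAlgebra k (Fin d)) :
    (ncPhi k d a).eval 1 = a := by
  have h : (Polynomial.eval₂RingHom' (RingHom.id (FreeAlgebra k (Fin d))) 1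
      (fun a => Commute.one_right _)).comp (ncPhi k d).toRingHom = RingHom.id _ := by
    apply RingHom.ext
    intro a
    refine FreeAlgebra.induction k (Fin d) (motive := fun a =>
      ((Polynomial.eval₂RingHom' (RingHom.id (FreeAlgebra k (Fin d))) 1
      (fun a => Commute.one_right _)).comp (ncPhi k d).toRingHom) a = RingHom.id _ a)
      ?_ ?_ ?_ ?_ a
    · intro r
      simp [Polynomial.eval₂RingHom', Polynomial.algebraMap_apply]
    · intro i
      simp [Polynomial.eval₂RingHom', ncPhi, Polynomial.eval₂_monomial]
    · intro a b ha hb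
      rw [map_mul, ha, hb, map_mul]
    · intro a b ha hb
      rw [map_add, ha, hb, map_add]
  exact DFunLike.congr_fun h a

/-- Elements whose components of degree `< N` lie in `I`. -/
noncomputable def ncTrunc {k : Type*} [Field k] {d : ℕ} (I : TwoSidedIdeal (FreeAlgebra k (Fin d)))
    (N : ℕ) : TwoSidedIdeal (FreeAlgebra k (Fin d)) :=
  TwoSidedIdeal.mk' {a | ∀ m < N, (ncPhi k d a).coeff m ∈ I}
    (by intro m _; simpa using I.zero_mem)
    (by intro x y hx hy m hm; simpa using I.add_mem (hx m hm) (hy m hm))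
    (by intro x hx m hm; simpa using I.neg_mem (hx m hm))
    (by
      intro x y hy m hm
      rw [map_mul, Polynomial.coeff_mul]
      refine sum_mem fun p hp => I.mul_mem_left _ _ (hy _ ?_)
      have := Finset.HasAntidiagonal.mem_antidiagonal.1 hp
      omega)
    (by
      intro x y hx m hm
      rw [map_mul, Polynomial.coeff_mul]
      refine sum_mem fun p hp => I.mul_mem_right _ _ (hx _ ?_)
      have := Finset.HasAntidiagonal.mem_antidiagonal.1 hp
      omega)

theorem mem_ncTrunc {k : Type*} [Field k] {d : ℕ} (I : TwoSidedIdeal (FreeAlgebra k (Fin d)))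
    (N : ℕ) (a : FreeAlgebra k (Fin d)) :
    a ∈ ncTrunc I N ↔ ∀ m < N, (ncPhi k d a).coeff m ∈ I := by
  unfold ncTrunc
  rw [TwoSidedIdeal.mem_mk']
  rfl

theorem nc_words_span (k : Type*) [Field k] (d : ℕ) :
    Submodule.span k (Set.range fun l : List (Fin d) => (l.map (FreeAlgebra.ι k)).prod) = ⊤ := by
  have h := congrArg Subalgebra.toSubmodule (FreeAlgebra.adjoin_range_ι (R := k) (X := Fin d))
  rw [Algebra.adjoin_eq_span, Algebra.top_toSubmodule] at h
  rw [eq_top_iff, ← h]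
  apply Submodule.span_mono
  intro x hx
  obtain ⟨l, hl, rfl⟩ := Submonoid.exists_list_of_mem_closure hx
  have : l ∈ Set.range (List.map (FreeAlgebra.ι k (X := Fin d))) := by
    rw [Set.range_list_map]; exact hl
  obtain ⟨l', rfl⟩ := this
  exact ⟨l', rfl⟩

/-- The quotient map as an algebra homomorphism. -/
noncomputable def ncMk {k : Type*} [Field k] {d : ℕ} (J : TwoSidedIdeal (FreeAlgebra k (Fin d))) :
    FreeAlgebra k (Fin d) →ₐ[k] J.ringCon.Quotient :=
  { J.ringCon.mk' with commutes' := fun _ => rfl }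

theorem ncMk_eq_zero {k : Type*} [Field k] {d : ℕ} (J : TwoSidedIdeal (FreeAlgebra k (Fin d)))
    (a : FreeAlgebra k (Fin d)) : ncMk J a = 0 ↔ a ∈ J := by
  rw [TwoSidedIdeal.mem_iff]
  exact RingCon.eq J.ringCon

theorem ncMk_surj {k : Type*} [Field k] {d : ℕ} (J : TwoSidedIdeal (FreeAlgebra k (Fin d))) :
    Function.Surjective (ncMk J) := J.ringCon.mk'_surjective

theorem ncTrunc_finite {k : Type*} [Field k] {d : ℕ} (I : TwoSidedIdeal (FreeAlgebra k (Fin d)))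
    (N : ℕ) : Module.Finite k (ncTrunc I N).ringCon.Quotient := by
  set J := ncTrunc I N
  let w : List (Fin d) → J.ringCon.Quotient := fun l => ncMk J (l.map (FreeAlgebra.ι k)).prod
  have hfin : (w '' {l | l.length < N}).Finite := (List.finite_length_lt (Fin d) N).image w
  refine ⟨⟨hfin.toFinset, ?_⟩⟩
  rw [hfin.coe_toFinset, eq_top_iff]
  have h1 : (⊤ : Submodule k J.ringCon.Quotient) = Submodule.map (ncMk J).toLinearMap ⊤ := by
    rw [Submodule.map_top]
    exact (LinearMap.range_eq_top.2 (ncMk_surj J)).symm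
  rw [h1, ← nc_words_span k d, Submodule.map_span, Submodule.span_le]
  rintro _ ⟨_, ⟨l, rfl⟩, rfl⟩
  by_cases hl : l.length < N
  · exact Submodule.subset_span ⟨l, hl, rfl⟩
  · have : ncMk J (l.map (FreeAlgebra.ι k)).prod = 0 := by
      rw [ncMk_eq_zero, mem_ncTrunc]
      intro m hm
      rw [ncPhi_word, Polynomial.coeff_monomial, if_neg (by omega)]
      exact I.zero_mem
    change ncMk J (l.map (FreeAlgebra.ι k)).prod ∈ _
    rw [this]
    exact Submodule.zero_mem _

theorem nc_mem_of_finite {k : Type*} [Field k] {d ℓ : ℕ} (f : Fin ℓ → FreeAlgebra k (Fin d))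
    (g : FreeAlgebra k (Fin d))
    (H : ∀ (n : ℕ), 1 ≤ n → ∀ X : Fin d → Matrix (Fin n) (Fin n) k,
        (∀ j, ncEval X (f j) = 0) → ncEval X g = 0)
    (J : TwoSidedIdeal (FreeAlgebra k (Fin d))) [Module.Finite k J.ringCon.Quotient]
    (hJ : ∀ j, f j ∈ J) : g ∈ J := by
  rw [← ncMk_eq_zero]
  rcases Nat.eq_zero_or_pos (Module.finrank k J.ringCon.Quotient) with h0 | hpos
  · have := Module.finrank_zero_iff.1 h0
    exact Subsingleton.elim _ _
  · let b := Module.finBasis k J.ringCon.Quotient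
    let F := ((LinearMap.toMatrixAlgEquiv b).toAlgHom.comp
      (Algebra.lmul k J.ringCon.Quotient)).comp (ncMk J)
    have hF : ∀ a, ncEval (fun i => F (FreeAlgebra.ι k i)) a = F a := by
      intro a
      have : FreeAlgebra.lift k (fun i => F (FreeAlgebra.ι k i)) = F := by
        apply FreeAlgebra.hom_ext
        funext i
        simp
      exact DFunLike.congr_fun this a
    have hg := H _ hpos (fun i => F (FreeAlgebra.ι k i)) (fun j => by
      rw [hF]
      change (LinearMap.toMatrixAlgEquiv b) (Algebra.lmul k _ (ncMk J (f j))) = 0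
      rw [(ncMk_eq_zero J _).2 (hJ j), map_zero, map_zero])
    rw [hF] at hg
    change (LinearMap.toMatrixAlgEquiv b) (Algebra.lmul k _ (ncMk J g)) = 0 at hg
    have hg2 := (LinearMap.toMatrixAlgEquiv b).injective (hg.trans (map_zero _).symm)
    simpa using LinearMap.congr_fun hg2 1

/-- Salomon–Shalit–Shamovich: for homogeneous `f_1, …, f_ℓ`, the polynomial `g`
vanishes on the common matricial zero set of the `f_j` if and only if `g` lies in
the two-sided ideal generated by `f_1, …, f_ℓ`. -/
theorem homogeneous_nullstellensatz
    (k : Type*) [Field k] [IsAlgClosed k] [CharZero k]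
    (d ℓ : ℕ) (hd : 1 ≤ d) (f : Fin ℓ → FreeAlgebra k (Fin d))
    (hhom : ∀ j, ∃ m : ℕ, IsNcHomogeneous m (f j))
    (g : FreeAlgebra k (Fin d)) :
    (∀ (n : ℕ), 1 ≤ n → ∀ X : Fin d → Matrix (Fin n) (Fin n) k,
        (∀ j, ncEval X (f j) = 0) → ncEval X g = 0) ↔
      g ∈ TwoSidedIdeal.span (Set.range f) := by
  constructor
  · intro H
    set I := TwoSidedIdeal.span (Set.range f) with hI
    have key : ∀ N, g ∈ ncTrunc I N := by
      intro N
      have := ncTrunc_finite I N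
      refine nc_mem_of_finite f g H _ fun j => ?_
      obtain ⟨n, hn⟩ := hhom j
      rw [mem_ncTrunc]
      intro m _
      rw [ncPhi_hom k d n _ hn, Polynomial.coeff_monomial]
      split_ifs
      · exact TwoSidedIdeal.subset_span ⟨j, rfl⟩
      · exact I.zero_mem
    rw [← ncPhi_sum k d g, Polynomial.eval_eq_sum, Polynomial.sum]
    refine sum_mem fun m _ => I.mul_mem_right _ _ ?_
    exact (mem_ncTrunc I (m + 1) g).1 (key _) m (Nat.lt_succ_self m)
  · intro hg n _ X hX
    have h : TwoSidedIdeal.span (Set.range f) ≤ TwoSidedIdeal.ker (FreeAlgebra.lift k X) := by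
      rw [TwoSidedIdeal.span_le]
      rintro _ ⟨j, rfl⟩
      exact (TwoSidedIdeal.mem_ker _).2 (hX j)
    exact (TwoSidedIdeal.mem_ker _).1 (h hg)
end

section
/- Let d ≥ 3 and let f ∈ k⟨x_1,…,x_d⟩ be a nonconstant polynomial lying in the unital subalgebra generated by x_1,…,x_{d−2} only. Let g ∈ k⟨x_1,…,x_d⟩. Then the following are equivalent: (i) for every n ≥ 1 and every X ∈ M_n(k)^d with X_{d−1}X_d − f(X) = 0, one has g(X) = 0; (ii) g belongs to the two-sided ideal of k⟨x_1,…,x_d⟩ generated by x_{d−1}x_d − f. -/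
namespace NCNull

open MonoidAlgebra

/-- The increasing filtration of the cyclic module generated by `v`. -/
noncomputable def U {k M : Type*} [Field k] [AddCommGroup M] [Module k M] {d : ℕ}
    (T : Fin d → Module.End k M) (v : M) : ℕ → Submodule k M
  | 0 => Submodule.span k {v}
  | n + 1 => U T v n ⊔ ⨆ i, (U T v n).map (T i)

section trunc

variable {k M : Type*} [Field k] [AddCommGroup M] [Module k M] {d : ℕ}
    (T : Fin d → Module.End k M) (v : M)

lemma U_mono : Monotone (U T v) :=
  monotone_nat_of_le_succ fun _ => le_sup_left

lemma U_fin (n : ℕ) : FiniteDimensional k (U T v n) := by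
  induction n with
  | zero =>
    change FiniteDimensional k (Submodule.span k {v})
    infer_instance
  | succ n ih =>
    change FiniteDimensional k ((U T v n ⊔ ⨆ i, (U T v n).map (T i) : Submodule k M))
    infer_instance

lemma U_step {n : ℕ} {u : M} (hu : u ∈ U T v n) (i : Fin d) : T i u ∈ U T v (n + 1) := by
  have h : (U T v n).map (T i) ≤ U T v (n + 1) :=
    le_trans (le_iSup (fun i => (U T v n).map (T i)) i) le_sup_right
  exact h (Submodule.mem_map_of_mem hu)

lemma U_deg (p : FreeAlgebra k (Fin d)) :
    ∃ D, ∀ j u, u ∈ U T v j → FreeAlgebra.lift k T p u ∈ U T v (j + D) := by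
  induction p with
  | grade0 r =>
    refine ⟨0, fun j u hu => ?_⟩
    simpa [Module.algebraMap_end_apply] using Submodule.smul_mem _ r hu
  | grade1 i =>
    refine ⟨1, fun j u hu => ?_⟩
    simpa using U_step T v hu i
  | mul a b ha hb =>
    obtain ⟨A, hA⟩ := ha
    obtain ⟨B, hB⟩ := hb
    refine ⟨B + A, fun j u hu => ?_⟩
    rw [map_mul, Module.End.mul_apply, ← add_assoc]
    exact hA _ _ (hB _ _ hu)
  | add a b ha hb =>
    obtain ⟨A, hA⟩ := ha
    obtain ⟨B, hB⟩ := hb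
    refine ⟨A + B, fun j u hu => ?_⟩
    rw [map_add, LinearMap.add_apply]
    exact Submodule.add_mem _ (U_mono T v (by omega) (hA _ _ hu))
      (U_mono T v (by omega) (hB _ _ hu))

lemma agree (p : FreeAlgebra k (Fin d)) :
    ∃ D, ∀ (V : Submodule k M) (T' : Fin d → Module.End k V) (K : ℕ),
      (∀ i (u : V), (u : M) ∈ U T v K → ((T' i u : V) : M) = T i u) →
      ∀ j (u : V), j + D ≤ K + 1 → (u : M) ∈ U T v j →
        ((FreeAlgebra.lift k T' p u : V) : M) = FreeAlgebra.lift k T p u := by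
  induction p with
  | grade0 r =>
    refine ⟨0, fun V T' K h j u hj hu => ?_⟩
    simp [Module.algebraMap_end_apply]
  | grade1 i =>
    refine ⟨1, fun V T' K h j u hj hu => ?_⟩
    simpa using h i u (U_mono T v (by omega) hu)
  | mul a b ha hb =>
    obtain ⟨A, hA⟩ := ha
    obtain ⟨B, hB⟩ := hb
    obtain ⟨C, hC⟩ := U_deg T v b
    refine ⟨A + B + C, fun V T' K h j u hj hu => ?_⟩
    have h1 := hB V T' K h j u (by omega) hu
    have h2 := hA V T' K h (j + C) (FreeAlgebra.lift k T' b u) (by omega)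
      (by rw [h1]; exact hC _ _ hu)
    rw [map_mul, Module.End.mul_apply, h2, h1, map_mul, Module.End.mul_apply]
  | add a b ha hb =>
    obtain ⟨A, hA⟩ := ha
    obtain ⟨B, hB⟩ := hb
    refine ⟨A + B, fun V T' K h j u hj hu => ?_⟩
    rw [map_add, LinearMap.add_apply, Submodule.coe_add, hA V T' K h j u (by omega) hu,
      hB V T' K h j u (by omega) hu, map_add, LinearMap.add_apply]

lemma trunc_exists (y z : Fin d) (hyz : y ≠ z) (S : Set (Fin d)) (hy : y ∉ S) (hz : z ∉ S)
    (f : FreeAlgebra k (Fin d)) (hf : f ∈ Algebra.adjoin k (FreeAlgebra.ι k '' S))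
    (hinj : Function.Injective (T y)) (hT : T y * T z = FreeAlgebra.lift k T f)
    (g : FreeAlgebra k (Fin d)) (hg : FreeAlgebra.lift k T g v ≠ 0) :
    ∃ n, 1 ≤ n ∧ ∃ X : Fin d → Matrix (Fin n) (Fin n) k,
      FreeAlgebra.lift k X (FreeAlgebra.ι k y * FreeAlgebra.ι k z - f) = 0 ∧
      FreeAlgebra.lift k X g ≠ 0 := by
  classical
  obtain ⟨Df, hDf⟩ := agree T v f
  obtain ⟨Dg, hDg⟩ := agree T v g
  set N := Df + Dg + 2 with hN
  set V := U T v N with hV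
  have : FiniteDimensional k V := U_fin T v N
  obtain ⟨P, hP⟩ := LinearMap.exists_leftInverse_of_injective V.subtype V.ker_subtype
  have hPv : ∀ m (hm : m ∈ V), P m = ⟨m, hm⟩ := fun m hm => LinearMap.congr_fun hP ⟨m, hm⟩
  let T2 : Fin d → Module.End k V := fun i => P ∘ₗ T i ∘ₗ V.subtype
  have hT2 : ∀ i (u : V), (u : M) ∈ U T v (Df + Dg + 1) → ((T2 i u : V) : M) = T i u := by
    intro i u hu
    change ((P (T i u) : V) : M) = T i u
    rw [hPv _ (U_step T v hu i)]
  let W : Submodule k V := (U T v (Df + Dg + 1)).comap V.subtype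
  let φ : W →ₗ[k] V := (T2 y).domRestrict W
  have hφ : Function.Injective φ := by
    intro a b hab
    have h := congrArg (Subtype.val) hab
    change ((T2 y a.1 : V) : M) = ((T2 y b.1 : V) : M) at h
    rw [hT2 y a.1 a.2, hT2 y b.1 b.2] at h
    exact Subtype.ext (Subtype.ext (hinj h))
  obtain ⟨E, hE⟩ := Submodule.exists_linearEquiv_restrict_eq (LinearEquiv.ofInjective φ hφ)
  have hE2 : ∀ u : V, (u : M) ∈ U T v (Df + Dg + 1) → ((E u : V) : M) = T y u := by
    intro u hu
    rw [← hT2 y u hu, ← hE ⟨u, hu⟩]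
    rfl
  let T3 : Fin d → Module.End k V := fun i =>
    if i = y then E.toLinearMap else if i = z then E.symm.toLinearMap ∘ₗ FreeAlgebra.lift k T2 f
    else T2 i
  have hfeq : FreeAlgebra.lift k T3 f = FreeAlgebra.lift k T2 f := by
    have h : Set.EqOn (FreeAlgebra.lift k T3) (FreeAlgebra.lift k T2)
        (Algebra.adjoin k (FreeAlgebra.ι k '' S)) := by
      apply AlgHom.eqOn_adjoin_iff.2
      rintro _ ⟨i, hi, rfl⟩
      have h1 : i ≠ y := fun h => hy (h ▸ hi)
      have h2 : i ≠ z := fun h => hz (h ▸ hi)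
      simp [T3, h1, h2]
    exact h hf
  have hT3y : T3 y = E.toLinearMap := by simp [T3]
  have hT3z : T3 z = E.symm.toLinearMap ∘ₗ FreeAlgebra.lift k T2 f := by simp [T3, hyz.symm]
  have hrel : FreeAlgebra.lift k T3 (FreeAlgebra.ι k y * FreeAlgebra.ι k z - f) = 0 := by
    rw [map_sub, map_mul, FreeAlgebra.lift_ι_apply, FreeAlgebra.lift_ι_apply, hfeq, hT3y, hT3z,
      sub_eq_zero]
    ext u
    simp [Module.End.mul_apply]
  have hT3 : ∀ i (u : V), (u : M) ∈ U T v Dg → ((T3 i u : V) : M) = T i u := by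
    intro i u hu
    by_cases h1 : i = y
    · rw [h1, hT3y]
      exact hE2 u (U_mono T v (by omega) hu)
    by_cases h2 : i = z
    · rw [h2, hT3z]
      have hs : T z u ∈ U T v (Df + Dg + 1) := U_mono T v (by omega) (U_step T v hu z)
      have hsV : T z u ∈ V := U_mono T v (by omega) hs
      have key : FreeAlgebra.lift k T2 f u = E ⟨T z u, hsV⟩ := by
        apply Subtype.ext
        rw [hDf V T2 (Df + Dg + 1) hT2 Dg u (by omega) hu, hE2 _ hs, ← hT]
        rfl
      change ((E.symm (FreeAlgebra.lift k T2 f u) : V) : M) = _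
      rw [key, LinearEquiv.symm_apply_apply]
    · have : T3 i = T2 i := by simp [T3, h1, h2]
      rw [this]
      exact hT2 i u (U_mono T v (by omega) hu)
  have hv0 : v ∈ U T v 0 := Submodule.mem_span_singleton_self v
  let v' : V := ⟨v, U_mono T v (Nat.zero_le _) hv0⟩
  have hgv : FreeAlgebra.lift k T3 g v' ≠ 0 := by
    intro h
    have h2 := hDg V T3 Dg hT3 0 v' (by omega) hv0
    rw [h] at h2
    exact hg h2.symm
  have hnt : Nontrivial V := ⟨_, _, hgv⟩
  let B := LinearMap.toMatrixAlgEquiv (Module.finBasis k V)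
  have hB : ∀ p, FreeAlgebra.lift k (fun i => B (T3 i)) p = B (FreeAlgebra.lift k T3 p) := by
    intro p
    have : FreeAlgebra.lift k (fun i => B (T3 i)) = B.toAlgHom.comp (FreeAlgebra.lift k T3) := by
      ext i : 2
      simp
    rw [this]
    rfl
  refine ⟨Module.finrank k V, Module.finrank_pos, fun i => B (T3 i), ?_, ?_⟩
  · rw [hB, hrel, map_zero]
  · rw [hB]
    intro h
    rw [map_eq_zero_iff B B.injective] at h
    exact hgv (by rw [h]; rfl)

end trunc

section words

variable {k : Type*} [Field k] {d : ℕ}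

/-- Strip a leading letter `z`. -/
noncomputable def strip (z : Fin d) :
    MonoidAlgebra k (FreeMonoid (Fin d)) →ₗ[k] MonoidAlgebra k (FreeMonoid (Fin d)) where
  toFun a := .ofCoeff (a.coeff.comapDomain (fun w => FreeMonoid.of z * w)
    (mul_right_injective _).injOn)
  map_add' a b := by ext; simp
  map_smul' a b := by ext; simp

lemma strip_mul (z : Fin d) (b : MonoidAlgebra k (FreeMonoid (Fin d))) :
    strip z (single (FreeMonoid.of z) 1 * b) = b := by
  ext w
  simp [strip]

lemma support_adjoin (S : Set (Fin d)) (f : FreeAlgebra k (Fin d))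
    (hf : f ∈ Algebra.adjoin k (FreeAlgebra.ι k '' S)) :
    ∀ w ∈ (FreeAlgebra.equivMonoidAlgebraFreeMonoid f).coeff.support, ∀ a ∈ w, a ∈ S := by
  classical
  induction hf using Algebra.adjoin_induction with
  | mem x hx =>
    obtain ⟨i, hi, rfl⟩ := hx
    intro w hw a ha
    simp [FreeAlgebra.equivMonoidAlgebraFreeMonoid] at hw
    rw [hw, FreeMonoid.mem_of] at ha
    exact ha ▸ hi
  | algebraMap r =>
    intro w hw a ha
    simp [Finsupp.single_apply] at hw
    rw [← hw.1] at ha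
    exact absurd ha FreeMonoid.notMem_one
  | add p q _ _ hp hq =>
    intro w hw a ha
    rw [map_add] at hw
    rcases Finset.mem_union.1 (Finsupp.support_add hw) with h | h
    · exact hp w h a ha
    · exact hq w h a ha
  | mul p q _ _ hp hq =>
    intro w hw a ha
    rw [map_mul] at hw
    obtain ⟨u, hu, t, ht, rfl⟩ := Finset.mem_mul.1 (support_coeff_mul_subset _ _ hw)
    rcases FreeMonoid.mem_mul.1 ha with h | h
    · exact hp u hu a h
    · exact hq t ht a h

/-- The twisted action of `y`. -/
noncomputable def Yop (y z : Fin d) (f : MonoidAlgebra k (FreeMonoid (Fin d))) :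
    Module.End k (MonoidAlgebra k (FreeMonoid (Fin d))) :=
  LinearMap.mulLeft k f ∘ₗ strip z + LinearMap.mulLeft k (single (FreeMonoid.of y) 1) ∘ₗ
    (LinearMap.id - LinearMap.mulLeft k (single (FreeMonoid.of z) 1) ∘ₗ strip z)

lemma Yop_apply (y z : Fin d) (f a : MonoidAlgebra k (FreeMonoid (Fin d))) :
    Yop y z f a = f * strip z a + single (FreeMonoid.of y) 1 *
      (a - single (FreeMonoid.of z) 1 * strip z a) := rfl

lemma exists_top (a : MonoidAlgebra k (FreeMonoid (Fin d))) (ha : a ≠ 0) :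
    ∃ m ∈ a.coeff.support, ∀ w ∈ a.coeff.support, w.length ≤ m.length := by
  apply Finset.exists_max_image
  rw [Finsupp.support_nonempty_iff]
  simpa using ha

lemma Yop_inj (y z : Fin d) (S : Set (Fin d)) (hy : y ∉ S)
    (f : MonoidAlgebra k (FreeMonoid (Fin d)))
    (hf : ∀ w ∈ f.coeff.support, ∀ a ∈ w, a ∈ S)
    (hfnc : ∀ c : k, f ≠ single 1 c) : Function.Injective (Yop y z f) := by
  rw [injective_iff_map_eq_zero]
  intro a ha
  rw [Yop_apply] at ha
  have hb : strip z a = 0 := by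
    by_contra hb
    have hf0 : f ≠ 0 := fun h => hfnc 0 (by simp [h])
    obtain ⟨m, hm, hmt⟩ := exists_top f hf0
    obtain ⟨w, hw, hwt⟩ := exists_top _ hb
    have hm1 : m ≠ 1 := by
      rintro rfl
      apply hfnc (f.coeff 1)
      ext u
      by_cases hu : u = 1
      · subst hu; simp
      · rw [coeff_single, Finsupp.single_eq_of_ne hu]
        by_contra h
        have := hmt u (Finsupp.mem_support_iff.2 h)
        rw [FreeMonoid.length_one, Nat.le_zero, FreeMonoid.length_eq_zero] at this
        exact hu this
    have huniq : UniqueMul f.coeff.support (strip z a).coeff.support m w := by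
      intro m' w' hm' hw' h
      have h1 := hmt m' hm'
      have h2 := hwt w' hw'
      have h3 := congrArg FreeMonoid.length h
      rw [FreeMonoid.length_mul, FreeMonoid.length_mul] at h3
      exact List.append_inj h (show m'.length = m.length by omega)
    have h1 := coeff_mul_mul_of_uniqueMul huniq
    have h2 : (single (FreeMonoid.of y) 1 *
      (a - single (FreeMonoid.of z) 1 * strip z a)).coeff (m * w) = 0 := by
      apply coeff_single_mul_of_forall_mul_ne
      intro u hu
      cases m using FreeMonoid.casesOn with
      | one => exact hm1 rfl
      | of_mul x xs =>
        have : y = x := by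
          have := congrArg (fun l => (FreeMonoid.toList l).head?) hu
          simpa using this
        subst this
        exact hy (hf _ hm _ (by simp [FreeMonoid.mem_mul]))
    have h3 := congrArg (fun p => p.coeff (m * w)) ha
    simp only [coeff_add, Finsupp.add_apply, h1, h2, add_zero, coeff_zero, Finsupp.zero_apply] at h3
    exact (mul_ne_zero (Finsupp.mem_support_iff.1 hm) (Finsupp.mem_support_iff.1 hw)) h3
  rw [hb] at ha
  simpa using ha

end words

end NCNull

/-- Klep–Vinnikov–Volčič: for `d ≥ 3` and a nonconstant `f` depending only on
`x_1, …, x_{d-2}`, a polynomial `g` vanishes on the matricial zero set of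
`x_{d-1} x_d - f` if and only if `g` lies in the two-sided ideal generated by
`x_{d-1} x_d - f`. -/
theorem rationally_resolvable_nullstellensatz
    (k : Type*) [Field k] [IsAlgClosed k] [CharZero k]
    (d : ℕ) (hd : 3 ≤ d) (f : FreeAlgebra k (Fin d))
    (hf : f ∈ Algebra.adjoin k
      (FreeAlgebra.ι k '' {i : Fin d | (i : ℕ) < d - 2}))
    (hfnc : f ∉ Set.range (algebraMap k (FreeAlgebra k (Fin d))))
    (g : FreeAlgebra k (Fin d)) :
    (∀ (n : ℕ), 1 ≤ n → ∀ X : Fin d → Matrix (Fin n) (Fin n) k,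
        ncEval X (FreeAlgebra.ι k (⟨d - 2, by omega⟩ : Fin d) *
          FreeAlgebra.ι k (⟨d - 1, by omega⟩ : Fin d) - f) = 0 →
        ncEval X g = 0) ↔
      g ∈ TwoSidedIdeal.span
        {FreeAlgebra.ι k (⟨d - 2, by omega⟩ : Fin d) *
          FreeAlgebra.ι k (⟨d - 1, by omega⟩ : Fin d) - f} := by
  classical
  set y : Fin d := ⟨d - 2, by omega⟩ with hy
  set z : Fin d := ⟨d - 1, by omega⟩ with hz
  constructor
  · intro h
    by_contra hg
    let E := FreeAlgebra.equivMonoidAlgebraFreeMonoid (R := k) (X := Fin d)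
    let S : Set (Fin d) := {i : Fin d | (i : ℕ) < d - 2}
    have hyS : y ∉ S := by simp [S, hy]
    have hzS : z ∉ S := by simp only [S, hz, Set.mem_ofPred_eq]; omega
    have hyz : y ≠ z := by
      intro h
      have := congrArg Fin.val h
      simp only [hy, hz] at this
      omega
    have hEι : ∀ i, E (FreeAlgebra.ι k i) = MonoidAlgebra.single (FreeMonoid.of i) 1 := by
      intro i
      simp [E, FreeAlgebra.equivMonoidAlgebraFreeMonoid]
    let T : Fin d → Module.End k (MonoidAlgebra k (FreeMonoid (Fin d))) := fun i =>
      if i = y then NCNull.Yop y z (E f) else LinearMap.mulLeft k (E (FreeAlgebra.ι k i))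
    have hTy : T y = NCNull.Yop y z (E f) := by simp [T]
    have hTn : ∀ i, i ≠ y → T i = LinearMap.mulLeft k (E (FreeAlgebra.ι k i)) := by
      intro i hi
      simp [T, hi]
    have hTf : FreeAlgebra.lift k T f = LinearMap.mulLeft k (E f) := by
      have h : Set.EqOn (FreeAlgebra.lift k T)
          ((Algebra.lmul k (MonoidAlgebra k (FreeMonoid (Fin d)))).comp E.toAlgHom)
          (Algebra.adjoin k (FreeAlgebra.ι k '' S)) := by
        apply AlgHom.eqOn_adjoin_iff.2
        rintro _ ⟨i, hi, rfl⟩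
        have h1 : i ≠ y := fun h => hyS (h ▸ hi)
        rw [FreeAlgebra.lift_ι_apply, hTn i h1]
        rfl
      exact h hf
    have hinj : Function.Injective (T y) := by
      rw [hTy]
      refine NCNull.Yop_inj y z S hyS (E f) (NCNull.support_adjoin S f hf) ?_
      intro c hc
      apply hfnc
      refine ⟨c, E.injective ?_⟩
      rw [hc, AlgEquiv.commutes]
      simp
    have hT : T y * T z = FreeAlgebra.lift k T f := by
      rw [hTf, hTy, hTn z hyz.symm, hEι]
      refine LinearMap.ext fun a => ?_
      rw [Module.End.mul_apply, LinearMap.mulLeft_apply, NCNull.Yop_apply, NCNull.strip_mul]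
      simp
    set I := TwoSidedIdeal.span {FreeAlgebra.ι k y * FreeAlgebra.ι k z - f} with hI
    have hmem : FreeAlgebra.ι k y * FreeAlgebra.ι k z - f ∈ I :=
      TwoSidedIdeal.subset_span rfl
    have key : ∀ p : FreeAlgebra k (Fin d), ∀ a,
        E.symm (FreeAlgebra.lift k T p a) - p * E.symm a ∈ I := by
      intro p
      induction p with
      | grade0 r =>
        intro a
        have : E.symm (FreeAlgebra.lift k T (algebraMap k _ r) a) -
            algebraMap k (FreeAlgebra k (Fin d)) r * E.symm a = 0 := by
          rw [AlgHom.commutes, Module.algebraMap_end_apply, map_smul, Algebra.smul_def, sub_self]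
        rw [this]
        exact I.zero_mem
      | grade1 i =>
        intro a
        rw [FreeAlgebra.lift_ι_apply]
        by_cases hi : i = y
        · subst hi
          have : E.symm (T y a) - FreeAlgebra.ι k y * E.symm a =
              -((FreeAlgebra.ι k y * FreeAlgebra.ι k z - f) * E.symm (NCNull.strip z a)) := by
            apply E.injective
            rw [hTy, NCNull.Yop_apply]
            simp only [map_sub, map_mul, map_neg, AlgEquiv.apply_symm_apply, hEι]
            noncomm_ring
          rw [this]
          exact I.neg_mem (I.mul_mem_right _ _ hmem)
        · have : E.symm (T i a) - FreeAlgebra.ι k i * E.symm a = 0 := by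
            apply E.injective
            rw [hTn i hi]
            simp
          rw [this]
          exact I.zero_mem
      | mul p q hp hq =>
        intro a
        have h1 := hp (FreeAlgebra.lift k T q a)
        have h2 := I.mul_mem_left p _ (hq a)
        have h3 := I.add_mem h1 h2
        rw [map_mul, Module.End.mul_apply]
        convert h3 using 1
        noncomm_ring
      | add p q hp hq =>
        intro a
        have h3 := I.add_mem (hp a) (hq a)
        rw [map_add, LinearMap.add_apply, map_add]
        convert h3 using 1
        noncomm_ring
    have hg1 : FreeAlgebra.lift k T g 1 ≠ 0 := by
      intro h0
      have h1 := key g 1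
      rw [h0, map_zero, map_one, mul_one, zero_sub] at h1
      exact hg (by simpa using I.neg_mem h1)
    obtain ⟨n, hn, X, hX, hXg⟩ := NCNull.trunc_exists T 1 y z hyz S hyS hzS f hf hinj hT g hg1
    exact hXg (h n hn X hX)
  · intro hg n _ X hX
    have hle : TwoSidedIdeal.span {FreeAlgebra.ι k y * FreeAlgebra.ι k z - f} ≤
        TwoSidedIdeal.ker (FreeAlgebra.lift k X) := by
      rw [TwoSidedIdeal.span_le]
      rintro _ rfl
      exact (TwoSidedIdeal.mem_ker _).2 hX
    exact (TwoSidedIdeal.mem_ker _).1 (hle hg)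
end

section
/- Let w_1, w_2 be nonempty words (products of variables) in x_1,…,x_d, both different from 1, such that the first letter of w_1 differs from the first letter of w_2, the last letter of w_1 differs from the last letter of w_2, and some variable x_i occurs exactly once in w_1 and does not occur in w_2. Let g ∈ k⟨x_1,…,x_d⟩. Then the following are equivalent: (i) for every n ≥ 1 and every X ∈ M_n(k)^d with w_1(X) − w_2(X) = 0, one has g(X) = 0; (ii) g belongs to the two-sided ideal of k⟨x_1,…,x_d⟩ generated by w_1 − w_2. -/
/-- The element of the free algebra corresponding to a word in the variables. -/
noncomputable def wordElt {k : Type*} [CommSemiring k] {d : ℕ}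
    (w : List (Fin d)) : FreeAlgebra k (Fin d) :=
  (w.map (FreeAlgebra.ι k)).prod

namespace BinNull

section Adjan
variable {X Y I : Type*}

/-- action of a list through letters -/
def act (s : Y → X → X) (u : List Y) (z : X) : X := u.foldr s z

@[simp] theorem act_nil (s : Y → X → X) (z : X) : act s [] z = z := rfl
@[simp] theorem act_cons (s : Y → X → X) (y : Y) (u : List Y) (z : X) :
    act s (y :: u) z = s y (act s u z) := rfl
theorem act_append (s : Y → X → X) (u v : List Y) (z : X) :
    act s (u ++ v) z = act s u (act s v z) := by
  simp [act, List.foldr_append]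

theorem act_inj (s : Y → X → X) (hinj : ∀ y, Function.Injective (s y)) (u : List Y) :
    Function.Injective (act s u) := by
  induction u with
  | nil => exact fun _ _ h => h
  | cons y u ih => exact fun a b h => ih (hinj y h)

/-- elementary step -/
def Stp (s : Y → X → X) (h : Bool → Y) (r : Bool → List Y) (α : Bool → I → X)
    (z z' : X) : Prop :=
  ∃ (ε : Bool) (u : List Y) (i : I), z = act s u (act s (h ε :: r ε) (α ε i)) ∧
    z' = act s u (act s (h (!ε) :: r (!ε)) (α (!ε) i))

/-- chains of at most `n` steps -/
inductive Ch (s : Y → X → X) (h : Bool → Y) (r : Bool → List Y) (α : Bool → I → X) :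
    ℕ → X → X → Prop
  | refl (n : ℕ) (z : X) : Ch s h r α n z z
  | step (n : ℕ) (z v w : X) : Ch s h r α n z v → Stp s h r α v w → Ch s h r α (n + 1) z w

variable {s : Y → X → X} {h : Bool → Y} {r : Bool → List Y} {α : Bool → I → X}

theorem Stp.symm {z w : X} (H : Stp s h r α z w) : Stp s h r α w z := by
  obtain ⟨ε, u, i, h1, h2⟩ := H
  exact ⟨!ε, u, i, h2, by simpa using h1⟩

theorem Stp.map {z w : X} (y : Y) (H : Stp s h r α z w) : Stp s h r α (s y z) (s y w) := by
  obtain ⟨ε, u, i, h1, h2⟩ := H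
  exact ⟨ε, y :: u, i, by simp [h1], by simp [h2]⟩

theorem Ch.succ {n : ℕ} {z w : X} (H : Ch s h r α n z w) : Ch s h r α (n + 1) z w := by
  induction H with
  | refl n z => exact .refl _ _
  | step n z v w _ hs ih => exact .step _ _ _ _ ih hs

theorem Ch.mono {n m : ℕ} {z w : X} (H : Ch s h r α n z w) (hnm : n ≤ m) :
    Ch s h r α m z w := by
  induction hnm with
  | refl => exact H
  | step _ ih => exact ih.succ

theorem Ch.trans {n m : ℕ} {z v w : X} (H : Ch s h r α n z v) (H' : Ch s h r α m v w) :
    Ch s h r α (n + m) z w := by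
  induction H' with
  | refl m z => exact H.mono (by omega)
  | step m z v w _ hs ih => exact .step _ _ _ _ (ih H) hs

theorem Ch.symm {n : ℕ} {z w : X} (H : Ch s h r α n z w) : Ch s h r α n w z := by
  induction H with
  | refl n z => exact .refl _ _
  | step n z v w _ hs ih =>
    have := (Ch.step 0 _ _ _ (.refl 0 w) hs.symm).trans ih
    exact this.mono (by omega)

theorem Ch.map {n : ℕ} {z w : X} (y : Y) (H : Ch s h r α n z w) :
    Ch s h r α n (s y z) (s y w) := by
  induction H with
  | refl n z => exact .refl _ _
  | step n z v w _ hs ih => exact .step _ _ _ _ ih (hs.map y)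

theorem Ch.mapAct {n : ℕ} {z w : X} (u : List Y) (H : Ch s h r α n z w) :
    Ch s h r α n (act s u z) (act s u w) := by
  induction u with
  | nil => exact H
  | cons y u ih => exact ih.map y

theorem live_act {Live : X → Prop} (hL2 : ∀ y z, Live z → Live (s y z)) (u : List Y) (z : X)
    (hz : Live z) : Live (act s u z) := by
  induction u with
  | nil => exact hz
  | cons y u ih => exact hL2 _ _ ih

theorem Ch.cancelAct {n : ℕ}
    (H : ∀ (y : Y) (z z' : X), Ch s h r α n (s y z) (s y z') → Ch s h r α n z z')
    (u : List Y) (z z' : X) (hc : Ch s h r α n (act s u z) (act s u z')) :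
    Ch s h r α n z z' := by
  induction u with
  | nil => exact hc
  | cons y u ih => exact ih (H _ _ _ hc)

theorem Ch.cancel (hinj : ∀ y, Function.Injective (s y)) (Live : X → Prop)
    (hL1 : ∀ ε i, Live (act s (h ε :: r ε) (α ε i)))
    (hL2 : ∀ y z, Live z → Live (s y z))
    (hdis : ∀ y y' z z', s y z = s y' z' → Live (s y z) → y = y')
    (hh : h true ≠ h false)
    (hcomp : ∀ ε n i j, Ch s h r α n (α ε i) (α ε j) → Ch s h r α n (α (!ε) i) (α (!ε) j)) :
    ∀ (n : ℕ) (y : Y) (z z' : X), Ch s h r α n (s y z) (s y z') → Ch s h r α n z z' := by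
  have hh' : ∀ ε, h ε ≠ h (!ε) := by
    intro ε; cases ε
    · exact hh.symm
    · exact hh
  intro n
  induction n using Nat.strong_induction_on with
  | _ n IH =>
  intro y z z' hc
  have key : ∀ (k : ℕ) (z₀ w : X), Ch s h r α k z₀ w → z₀ = s y z → k ≤ n →
      (∃ ζ, w = s y ζ ∧ Ch s h r α k z ζ) ∨
      ∃ (ε : Bool) (i : I) (ζ : X) (n1 n2 : ℕ), y = h ε ∧ n1 + n2 + 1 ≤ k ∧
        Ch s h r α n1 z (act s (r ε) (α ε i)) ∧ w = s (h (!ε)) ζ ∧ Live w ∧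
        Ch s h r α n2 (act s (r (!ε)) (α (!ε) i)) ζ := by
    intro k z₀ w hk
    induction hk with
    | refl k z₀ => intro hz _; exact Or.inl ⟨z, hz, .refl _ _⟩
    | step k z₀ v w hkv hs ih =>
      intro hz hkn
      rcases ih hz (by omega) with ⟨ζ, hv, hζ⟩ | ⟨ε, i, ζ, n1, n2, hy, hn, hc1, hv, hlv, hc2⟩
      · obtain ⟨ε, u, i, h1, h2⟩ := hs
        have hlv : Live v := h1 ▸ live_act hL2 _ _ (hL1 ε i)
        have hlw : Live w := h2 ▸ live_act hL2 _ _ (hL1 (!ε) i)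
        cases u with
        | nil =>
          simp only [act_nil, act_cons] at h1 h2
          have hyε : y = h ε := hdis _ _ _ _ (hv.symm.trans h1) (hv ▸ hlv)
          have : ζ = act s (r ε) (α ε i) := by
            apply hinj y
            rw [← hv, h1, hyε]
          exact Or.inr ⟨ε, i, _, k, 0, hyε, by omega, this ▸ hζ, h2, hlw, .refl _ _⟩
        | cons y' u =>
          rw [act_cons] at h1 h2
          have hyε : y = y' := hdis _ _ _ _ (hv.symm.trans h1) (hv ▸ hlv)
          subst hyε
          refine Or.inl ⟨_, h2, .step _ _ _ _ hζ ⟨ε, u, i, ?_, rfl⟩⟩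
          apply hinj y
          rw [← hv, h1]
      · obtain ⟨ε', u, j, h1, h2⟩ := hs
        have hlw : Live w := h2 ▸ live_act hL2 _ _ (hL1 (!ε') j)
        cases u with
        | nil =>
          simp only [act_nil, act_cons] at h1 h2
          have hyε : h (!ε) = h ε' := hdis _ _ _ _ (hv.symm.trans h1) (hv ▸ hlv)
          have hε : ε' = !ε := by
            by_contra hne
            have : ε' = ε := by cases ε <;> cases ε' <;> simp_all
            subst this
            exact hh' ε' hyε.symm
          subst hε
          have hζ : ζ = act s (r (!ε)) (α (!ε) j) := by
            apply hinj (h (!ε))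
            rw [← hv, h1]
          subst hζ
          have h3 := Ch.cancelAct (IH n2 (by omega)) _ _ _ hc2
          have h4 := hcomp _ _ _ _ h3
          rw [Bool.not_not] at h4 h2
          exact Or.inl ⟨_, hy ▸ h2, (hc1.trans (h4.mapAct (r ε))).mono (by omega)⟩
        | cons y' u =>
          rw [act_cons] at h1 h2
          have hyε : h (!ε) = y' := hdis _ _ _ _ (hv.symm.trans h1) (hv ▸ hlv)
          subst hyε
          refine Or.inr ⟨ε, i, _, n1, n2 + 1, hy, by omega, hc1, h2, hlw,
            .step _ _ _ _ hc2 ⟨ε', u, j, ?_, rfl⟩⟩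
          apply hinj (h (!ε))
          rw [← hv, h1]
  rcases key n _ _ hc rfl le_rfl with ⟨ζ, hv, hζ⟩ | ⟨ε, i, ζ, n1, n2, hy, hn, hc1, hv, hlv, hc2⟩
  · rw [hinj y hv]; exact hζ
  · exact absurd (hy.symm.trans (hdis _ _ _ _ hv hlv)) (hh' ε)

theorem Ch.frozen {Live : X → Prop}
    (hL1 : ∀ ε i, Live (act s (h ε :: r ε) (α ε i)))
    (hL2 : ∀ y z, Live z → Live (s y z)) {n : ℕ} {z w : X} (H : Ch s h r α n z w)
    (hz : ¬ Live z) : z = w := by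
  induction H with
  | refl n z => rfl
  | step n z v w _ hs ih =>
    have := ih hz
    subst this
    obtain ⟨ε, u, i, h1, h2⟩ := hs
    exact absurd (h1 ▸ live_act hL2 _ _ (hL1 ε i)) hz

/-- the setoid of chains -/
def chSetoid (s : Y → X → X) (h : Bool → Y) (r : Bool → List Y) (α : Bool → I → X) :
    Setoid X where
  r z w := ∃ n, Ch s h r α n z w
  iseqv := ⟨fun z => ⟨0, .refl _ _⟩, fun ⟨n, hn⟩ => ⟨n, hn.symm⟩,
    fun ⟨_, hn⟩ ⟨_, hm⟩ => ⟨_, hn.trans hm⟩⟩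

end Adjan

/-- Left cancellative quotient of the free monoid. -/
theorem exists_M {A : Type} (w₁ w₂ : List A)
    (hne₁ : w₁ ≠ []) (hne₂ : w₂ ≠ [])
    (hhead : w₁.head hne₁ ≠ w₂.head hne₂) :
    ∃ (M : Type) (mk : List A → M) (l : A → M → M), (∀ y u, mk (y :: u) = l y (mk u)) ∧
      (∀ y, Function.Injective (l y)) ∧ Function.Surjective mk ∧
      (∀ m, act l w₁ m = act l w₂ m) ∧
      ∀ u v, mk u = mk v → ∀ (P : List A → List A → Prop), Equivalence P →
        (∀ p q, P (p ++ (w₁ ++ q)) (p ++ (w₂ ++ q))) → P u v := by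
  obtain ⟨h₁, r₁, rfl⟩ := List.exists_cons_of_ne_nil hne₁
  obtain ⟨h₂, r₂, rfl⟩ := List.exists_cons_of_ne_nil hne₂
  simp only [List.head_cons] at hhead
  let s : A → List A → List A := List.cons
  let h : Bool → A := fun ε => if ε then h₁ else h₂
  let r : Bool → List A := fun ε => if ε then r₁ else r₂
  let α : Bool → List A → List A := fun _ v => v
  have hact : ∀ u v : List A, act s u v = u ++ v := by
    intro u v; induction u with
    | nil => rfl
    | cons y u ih => simp [ih, s]
  have hcan := Ch.cancel (s := s) (h := h) (r := r) (α := α)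
    (fun y a b hab => (List.cons.inj hab).2) (fun _ => True) (by simp) (by simp)
    (fun y y' z z' hab _ => (List.cons.inj hab).1) (by simpa [h] using hhead)
    (fun ε n i j hc => hc)
  let S := chSetoid s h r α
  let l : A → Quotient S → Quotient S := fun y =>
    Quotient.map (s y) (fun a b ⟨n, hn⟩ => ⟨n, hn.map y⟩)
  have hl : ∀ u v, act l u (Quotient.mk S v) = Quotient.mk S (u ++ v) := by
    intro u v
    induction u with
    | nil => rfl
    | cons y u ih => rw [act_cons, ih]; rfl
  refine ⟨Quotient S, Quotient.mk S, l, fun y u => rfl, ?_, Quotient.mk_surjective, ?_, ?_⟩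
  · intro y a b
    induction a using Quotient.inductionOn
    induction b using Quotient.inductionOn
    intro hab
    obtain ⟨n, hn⟩ := Quotient.exact hab
    exact Quotient.sound ⟨n, hcan n y _ _ hn⟩
  · intro m
    induction m using Quotient.inductionOn with
    | _ v =>
    rw [hl, hl]
    refine Quotient.sound ⟨1, .step 0 _ _ _ (.refl _ _) ⟨true, [], v, ?_, ?_⟩⟩
    · simp [hact, h, r, α, s]
    · simp [hact, h, r, α, s]
  · intro u v huv P hP hPs
    obtain ⟨n, hn⟩ := Quotient.exact huv
    induction hn with
    | refl n z => exact hP.refl _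
    | step n z v w hc hs ih =>
      refine hP.trans (ih (Quotient.sound ⟨n, hc⟩)) ?_
      obtain ⟨ε, p, q, e1, e2⟩ := hs
      rw [hact, hact] at e1 e2
      cases ε
      · simp only [h, r, α, Bool.not_false, if_true] at e1 e2
        rw [e1, e2]
        exact hP.symm (hPs p q)
      · simp only [h, r, α, Bool.not_true, if_true] at e1 e2
        rw [e1, e2]
        exact (hPs p q)

/-- Adding enough inverses. -/
theorem exists_Z {A M : Type} (l : A → M → M) (hl : ∀ y, Function.Injective (l y))
    (a b c : List A) (x : A) (hc : c ≠ [])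
    (hlast : ∀ hb : b ≠ [], b.getLast hb ≠ c.getLast hc)
    (hrel : ∀ m, act l a (l x (act l b m)) = act l c m) :
    ∃ (Z : Type) (s : A → Z → Z) (ι : M → Z), (∀ y, Function.Injective (s y)) ∧
      Function.Injective ι ∧ (∀ y m, s y (ι (l y m)) = ι m) ∧
      ∀ m, act s b.reverse (ι m) = act s c.reverse (ι (act l a (l x m))) := by
  classical
  let s : A → M × List A → M × List A := fun y z =>
    if H : z.2 = [] ∧ ∃ m, z.1 = l y m then (H.2.choose, []) else (z.1, y :: z.2)
  have s1 : ∀ y m, s y (l y m, []) = (m, []) := by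
    intro y m
    have H : (((l y m, []) : M × List A).2 = [] ∧ ∃ m', (l y m, ([] : List A)).1 = l y m') :=
      ⟨rfl, m, rfl⟩
    simp only [s, dif_pos H]
    have := H.2.choose_spec
    rw [← hl y this]
  have s2 : ∀ y z, ¬ (z.2 = [] ∧ ∃ m, z.1 = l y m) → s y z = (z.1, y :: z.2) := by
    intro y z H
    simp only [s, dif_neg H]
  have sinj : ∀ y, Function.Injective (s y) := by
    rintro y ⟨m, u⟩ ⟨m', u'⟩ hz
    by_cases H : (u = [] ∧ ∃ n, m = l y n) <;> by_cases H' : (u' = [] ∧ ∃ n, m' = l y n)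
    · obtain ⟨rfl, n, rfl⟩ := H
      obtain ⟨rfl, n', rfl⟩ := H'
      rw [s1, s1] at hz
      rw [(Prod.mk.inj hz).1]
    · obtain ⟨rfl, n, rfl⟩ := H
      rw [s1, s2 _ _ H'] at hz
      simp at hz
    · obtain ⟨rfl, n, rfl⟩ := H'
      rw [s1, s2 _ _ H] at hz
      simp at hz
    · rw [s2 _ _ H, s2 _ _ H'] at hz
      simpa using hz
  have sdis : ∀ y y' z z', s y z = s y' z' → (s y z).2 ≠ [] → y = y' := by
    rintro y y' ⟨m, u⟩ ⟨m', u'⟩ hz hlive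
    by_cases H : (u = [] ∧ ∃ n, m = l y n) <;> by_cases H' : (u' = [] ∧ ∃ n, m' = l y' n)
    · obtain ⟨rfl, n, rfl⟩ := H
      rw [s1] at hlive; simp at hlive
    · obtain ⟨rfl, n, rfl⟩ := H
      rw [s1] at hlive; simp at hlive
    · obtain ⟨rfl, n, rfl⟩ := H'
      rw [hz, s1] at hlive; simp at hlive
    · rw [s2 _ _ H, s2 _ _ H'] at hz
      simp at hz
      exact hz.2.1
  have sL : ∀ y z, z.2 ≠ [] → (s y z).2 ≠ [] := by
    intro y z hz
    rw [s2 _ _ (fun H => hz H.1)]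
    simp
  have linv : ∀ (u : List A) (m : M), act s u.reverse (act l u m, []) = (m, []) := by
    intro u
    induction u with
    | nil => intro m; rfl
    | cons y u ih =>
      intro m
      rw [List.reverse_cons, act_append, act_cons, act_nil, act_cons, s1, ih]
  have live : ∀ (u : List A) (m : M), (¬ ∃ m', m = act l u m') →
      (act s u.reverse (m, [])).2 ≠ [] := by
    intro u
    induction u with
    | nil => intro m hm; exact absurd ⟨m, rfl⟩ hm
    | cons y u ih =>
      intro m hm
      rw [List.reverse_cons, act_append, act_cons, act_nil]
      by_cases H : ∃ n, m = l y n
      · obtain ⟨n, rfl⟩ := H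
        rw [s1]
        apply ih
        rintro ⟨m', rfl⟩
        exact hm ⟨m', rfl⟩
      · rw [s2 _ _ (fun H' => H H'.2)]
        exact live_act (Live := fun z : M × List A => z.2 ≠ []) sL _ _ (by simp)
  by_cases hb : b = []
  · subst hb
    refine ⟨M × List A, s, fun m => (m, []), sinj, fun a b hab => (Prod.mk.inj hab).1, s1, ?_⟩
    intro m
    have := hrel m
    rw [act_nil] at this
    rw [this, linv]; rfl
  obtain ⟨b', yb, rfl⟩ := List.eq_nil_or_concat b |>.resolve_left hb
  obtain ⟨c', yc, rfl⟩ := List.eq_nil_or_concat c |>.resolve_left hc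
  have hbc : yb ≠ yc := by simpa using hlast hb
  let I := {m : M // ¬ ∃ m', m = act l (b'.concat yb) m'}
  let h : Bool → A := fun ε => if ε then yb else yc
  let r : Bool → List A := fun ε => if ε then b'.reverse else c'.reverse
  let α : Bool → I → M × List A := fun ε i =>
    if ε then (i.1, []) else (act l a (l x i.1), [])
  have pT : h true :: r true = (b'.concat yb).reverse := by simp [h, r]
  have pF : h false :: r false = (c'.concat yc).reverse := by simp [h, r]
  have hL1 : ∀ ε i, (act s (h ε :: r ε) (α ε i)).2 ≠ [] := by
    intro ε i
    cases ε
    · rw [pF]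
      apply live
      rintro ⟨m', hm'⟩
      rw [← hrel] at hm'
      exact i.2 ⟨m', hl x (act_inj l hl a hm')⟩
    · rw [pT]
      exact live _ _ i.2
  have hα : ∀ ε i, ¬ ((α ε i).2 ≠ []) := by
    intro ε i; cases ε <;> simp [α]
  have hcan := Ch.cancel (s := s) (h := h) (r := r) (α := α) sinj (fun z => z.2 ≠ [])
    hL1 sL sdis (by simpa [h] using hbc) (by
      intro ε n i j hij
      have e := hij.frozen hL1 sL (hα ε i)
      have : i = j := by
        cases ε
        · have e1 := (Prod.mk.inj e).1
          exact Subtype.ext (hl x (act_inj l hl a e1))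
        · have e1 := (Prod.mk.inj e).1
          exact Subtype.ext e1
      subst this
      exact .refl _ _)
  let S := chSetoid s h r α
  let t : A → Quotient S → Quotient S := fun y =>
    Quotient.map (s y) (fun a b ⟨n, hn⟩ => ⟨n, hn.map y⟩)
  have ht : ∀ u v, act t u (Quotient.mk S v) = Quotient.mk S (act s u v) := by
    intro u v
    induction u with
    | nil => rfl
    | cons y u ih => rw [act_cons, ih]; rfl
  refine ⟨Quotient S, t, fun m => Quotient.mk S (m, []), ?_, ?_, ?_, ?_⟩
  · intro y a b
    induction a using Quotient.inductionOn
    induction b using Quotient.inductionOn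
    intro hab
    obtain ⟨n, hn⟩ := Quotient.exact hab
    exact Quotient.sound ⟨n, hcan n y _ _ hn⟩
  · intro m m' hmm
    obtain ⟨n, hn⟩ := Quotient.exact hmm
    exact (Prod.mk.inj (hn.frozen (Live := fun z : M × List A => z.2 ≠ []) hL1 sL (by simp))).1
  · intro y m
    change Quotient.mk S (s y (l y m, [])) = _
    rw [s1]
  · intro m
    rw [ht, ht]
    by_cases hm : ∃ m', m = act l (b'.concat yb) m'
    · obtain ⟨m', rfl⟩ := hm
      rw [hrel, linv, linv]
    · refine Quotient.sound ⟨1, .step 0 _ _ _ (.refl _ _) ⟨true, [], ⟨m, hm⟩, ?_, ?_⟩⟩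
      · rw [pT]; rfl
      · rw [Bool.not_true, pF]; rfl

theorem exists_perm {Z : Type} (S : Set Z) (hS : S.Finite) (s : Z → Z)
    (hs : Function.Injective s) :
    ∃ σ : Equiv.Perm S, ∀ z : S, s z ∈ S → (σ z : Z) = s z := by
  classical
  have : Fintype S := hS.fintype
  let p : S → Prop := fun z => s z ∈ S
  let q : S → Prop := fun z => ∃ w : S, s w = z
  let f : {z : S // p z} → {z : S // q z} := fun z => ⟨⟨s z.1, z.2⟩, z.1, rfl⟩
  have hf : Function.Bijective f := by
    constructor
    · intro z w hzw
      have := congrArg (fun t : {z : S // q z} => (t.1 : Z)) hzw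
      exact Subtype.ext (Subtype.ext (hs this))
    · rintro ⟨⟨z, hz⟩, w, hw⟩
      simp only at hw
      subst hw
      exact ⟨⟨w, hz⟩, rfl⟩
  let e := Equiv.ofBijective f hf
  refine ⟨e.extendSubtype, fun z hz => ?_⟩
  rw [Equiv.extendSubtype_apply_of_mem e z hz]
  rfl

theorem core {A : Type} [Finite A] (a b c : List A) (x : A) (hc : c ≠ [])
    (hxa : x ∉ a) (hxb : x ∉ b) (hxc : x ∉ c)
    (hhead : (a ++ x :: b).head (by simp) ≠ c.head hc)
    (hlast : (a ++ x :: b).getLast (by simp) ≠ c.getLast hc) :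
    ∃ (M : Type) (mk : List A → M),
      (∀ u v, mk u = mk v → ∀ (P : List A → List A → Prop), Equivalence P →
        (∀ p q, P (p ++ ((a ++ x :: b) ++ q)) (p ++ (c ++ q))) → P u v) ∧
      ∀ N : ℕ, ∃ (n : ℕ) (T : A → Equiv.Perm (Fin n)) (e : Fin n),
        ((a ++ x :: b).map T).prod = (c.map T).prod ∧
        ∀ u v : List A, u.length ≤ N → v.length ≤ N →
          ((u.map T).prod e = (v.map T).prod e ↔ mk u = mk v) := by
  classical
  obtain ⟨M, mk, l, hmk, hl, hsurj, hrel, huniv⟩ := exists_M _ c (by simp) hc hhead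
  refine ⟨M, mk, huniv, fun N => ?_⟩
  obtain ⟨Z, s, ι, hs, hι, hsl, hbr⟩ := exists_Z l hl a b c x hc
    (by intro hb; rw [List.getLast_append_of_ne_nil _ (by simp : x :: b ≠ []), List.getLast_cons hb] at hlast
        exact hlast)
    (by intro m; rw [← hrel, act_append]; rfl)
  have hmka : ∀ u v, mk (u ++ v) = act l u (mk v) := by
    intro u v; induction u with
    | nil => rfl
    | cons y u ih => rw [List.cons_append, hmk, ih]; rfl
  have hsla : ∀ (u : List A) m, act s u.reverse (ι (act l u m)) = ι m := by
    intro u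
    induction u with
    | nil => intro m; rfl
    | cons y u ih =>
      intro m
      rw [List.reverse_cons, act_append, act_cons, act_nil, act_cons, hsl, ih]
  let L := N + a.length + b.length + c.length + 1
  let S : Set Z := Set.image2 (fun u v => act s u (ι (mk v))) {u | u.length ≤ L} {v | v.length ≤ L}
  have hS : S.Finite := Set.Finite.image2 _ (List.finite_length_le A L) (List.finite_length_le A L)
  have hmem : ∀ u v : List A, u.length ≤ L → v.length ≤ L → act s u (ι (mk v)) ∈ S :=
    fun u v hu hv => ⟨u, hu, v, hv, rfl⟩
  choose σ hσ using fun y => exists_perm S hS (s y) (hs y)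
  -- inverse action
  let V : A → Equiv.Perm S := fun y => (σ y)⁻¹
  let T : A → Equiv.Perm S := fun y =>
    if y = x then (a.map V).prod⁻¹ * (c.map V).prod * (b.map V).prod⁻¹ else V y
  have hT : ∀ u : List A, x ∉ u → u.map T = u.map V := by
    intro u hu
    apply List.map_congr_left
    intro y hy
    have : y ≠ x := fun h => hu (h ▸ hy)
    simp [T, this]
  have hTx : T x = (a.map V).prod⁻¹ * (c.map V).prod * (b.map V).prod⁻¹ := by simp [T]
  have hTrel : ((a ++ x :: b).map T).prod = (c.map T).prod := by
    rw [List.map_append, List.map_cons, hT a hxa, hT b hxb, hT c hxc, List.prod_append,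
      List.prod_cons, hTx]
    group
  -- inverse of products
  have hinv : ∀ (u : List A) (z : S), (u.map V).prod⁻¹ z = act (fun y => σ y) u.reverse z := by
    intro u
    induction u with
    | nil => intro z; simp
    | cons y u ih =>
      intro z
      rw [List.map_cons, List.prod_cons, mul_inv_rev, Equiv.Perm.mul_apply, ih,
        List.reverse_cons, act_append]
      simp [V]
  have hpath : ∀ (u v : List A), u.length ≤ L → (hv : v.length ≤ L) →
      ((act (fun y => σ y) u ⟨ι (mk v), hmem [] v (by simp) hv⟩ : S) : Z) =
        act s u (ι (mk v)) := by
    intro u v hu hv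
    induction u with
    | nil => rfl
    | cons y u ih =>
      have hu' : u.length ≤ L := by simp at hu; omega
      rw [act_cons, act_cons, hσ, ih hu']
      rw [ih hu']
      exact hmem (y :: u) v hu hv
  have hpinv : ∀ (u v : List A), u.length ≤ L → (hv : v.length ≤ L) →
      (((u.map V).prod⁻¹ ⟨ι (mk v), hmem [] v (by simp) hv⟩ : S) : Z) =
        act s u.reverse (ι (mk v)) := by
    intro u v hu hv
    rw [hinv, hpath _ _ (by simpa using hu) hv]
  have hVinv : ∀ (u v : List A), u.length ≤ L → (huv : (u ++ v).length ≤ L) →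
      (hv : v.length ≤ L) →
      (u.map V).prod⁻¹ ⟨ι (mk (u ++ v)), hmem [] _ (by simp) huv⟩ =
        ⟨ι (mk v), hmem [] v (by simp) hv⟩ := by
    intro u v hu huv hv
    apply Subtype.ext
    rw [hpinv u _ hu huv, hmka, hsla]
  let e : S := ⟨ι (mk []), hmem [] [] (by simp) (by simp)⟩
  have main : ∀ (u : List A) (hu : u.length ≤ N),
      (u.map T).prod e = ⟨ι (mk u), hmem [] u (by simp) (by omega)⟩ := by
    intro u
    induction u with
    | nil => intro _; rfl
    | cons y u ih =>
      intro hu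
      rw [List.length_cons] at hu
      rw [List.map_cons, List.prod_cons, Equiv.Perm.mul_apply, ih (by omega)]
      by_cases hy : y = x
      · subst hy
        rw [hTx, Equiv.Perm.mul_apply, Equiv.Perm.mul_apply]
        have hlen : (a ++ y :: u).length ≤ L := by simp [L]; omega
        have e1 : (b.map V).prod⁻¹ ⟨ι (mk u), hmem [] u (by simp) (by omega)⟩ =
            (c.map V).prod⁻¹ ⟨ι (mk (a ++ y :: u)), hmem [] _ (by simp) hlen⟩ := by
          apply Subtype.ext
          rw [hpinv _ _ (by omega) (by omega), hpinv _ _ (by omega) hlen, hbr, hmka, hmk]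
        have hcc : ∀ (τ : Equiv.Perm S) (z : S), τ (τ⁻¹ z) = z := fun τ z => τ.apply_symm_apply z
        rw [e1, hcc]
        exact hVinv a (y :: u) (by omega) hlen (by simp; omega)
      · have : T y = V y := by simp [T, hy]
        rw [this]
        have h1 := hVinv [y] u (by simp [L]) (by simp [L]; omega) (by omega)
        simp only [List.map_cons, List.map_nil, List.prod_cons, List.prod_nil, mul_one,
          List.singleton_append] at h1
        rw [← h1, ← Equiv.Perm.mul_apply, mul_inv_cancel, Equiv.Perm.one_apply]
  have : Fintype S := hS.fintype
  let E : S ≃ Fin (Fintype.card S) := Fintype.equivFin S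
  have hE : ∀ u : List A, (u.map (fun y => E.permCongrHom (T y))).prod =
      E.permCongrHom (u.map T).prod := by
    intro u
    rw [map_list_prod, List.map_map]; rfl
  refine ⟨_, fun y => E.permCongrHom (T y), E e, ?_, ?_⟩
  · rw [hE, hE, hTrel]
  · intro u v hu hv
    rw [hE, hE]
    simp only [Equiv.permCongrHom_coe, Equiv.permCongr_apply, Equiv.symm_apply_apply,
      EmbeddingLike.apply_eq_iff_eq]
    rw [main u hu, main v hv]
    exact ⟨fun h => hι (congrArg Subtype.val h), fun h => Subtype.ext (congrArg ι h)⟩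

end BinNull

theorem BinNull.exists_words (k : Type*) [Field k] (d : ℕ) (g : FreeAlgebra k (Fin d)) :
    ∃ f : List (Fin d) →₀ k, (f.sum fun u c => c • (wordElt u : FreeAlgebra k (Fin d))) = g := by
  rw [← Finsupp.mem_span_range_iff_exists_finsupp]
  have hmul : ∀ u v : List (Fin d),
      (wordElt u * wordElt v : FreeAlgebra k (Fin d)) = wordElt (u ++ v) := by
    intro u v; simp [wordElt]
  induction g using FreeAlgebra.induction with
  | grade0 c =>
    rw [Algebra.algebraMap_eq_smul_one]
    exact Submodule.smul_mem _ _ (Submodule.subset_span ⟨[], by simp [wordElt]⟩)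
  | grade1 x => exact Submodule.subset_span ⟨[x], by simp [wordElt]⟩
  | mul p q hp hq =>
    have h := Submodule.mul_mem_mul hp hq
    rw [Submodule.span_mul_span] at h
    refine Submodule.span_mono ?_ h
    rintro _ ⟨_, ⟨u, rfl⟩, _, ⟨v, rfl⟩, rfl⟩
    exact ⟨u ++ v, (hmul u v).symm⟩
  | add p q hp hq => exact Submodule.add_mem _ hp hq

/-- permutation matrix -/
def BinNull.pm (k : Type*) [Field k] {n : ℕ} (σ : Equiv.Perm (Fin n)) :
    Matrix (Fin n) (Fin n) k := Matrix.of fun i j => if i = σ j then 1 else 0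

theorem BinNull.pm_prod (k : Type*) [Field k] {n d : ℕ} (T : Fin d → Equiv.Perm (Fin n))
    (u : List (Fin d)) :
    ncEval (fun y => BinNull.pm k (T y)) (wordElt u) = BinNull.pm k (u.map T).prod := by
  induction u with
  | nil =>
    simp only [ncEval, wordElt, List.map_nil, List.prod_nil, map_one]
    ext i j
    simp only [BinNull.pm, Matrix.one_apply, Matrix.of_apply, Equiv.Perm.one_apply]
    by_cases hij : i = j
    · exact (if_pos hij).trans (if_pos hij).symm
    · exact (if_neg hij).trans (if_neg hij).symm
  | cons y u ih =>
    have : (wordElt (y :: u) : FreeAlgebra k (Fin d)) = FreeAlgebra.ι k y * wordElt u := by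
      simp [wordElt]
    rw [this]
    unfold ncEval at ih ⊢
    rw [map_mul, ih, FreeAlgebra.lift_ι_apply]
    ext i j
    simp [BinNull.pm, Matrix.mul_apply]

/-- Klep–Vinnikov–Volčič: let `w_1, w_2` be nonempty words with different first
letters and different last letters, such that some variable occurs exactly once
in `w_1` and not at all in `w_2`.  Then `g` vanishes on the matricial zero set of
`w_1 - w_2` if and only if `g` lies in the two-sided ideal generated by `w_1 - w_2`. -/
theorem binomial_nullstellensatz
    (k : Type*) [Field k] [IsAlgClosed k] [CharZero k]
    (d : ℕ) (hd : 1 ≤ d) (w₁ w₂ : List (Fin d))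
    (hne₁ : w₁ ≠ []) (hne₂ : w₂ ≠ [])
    (hhead : w₁.head hne₁ ≠ w₂.head hne₂)
    (hlast : w₁.getLast hne₁ ≠ w₂.getLast hne₂)
    (hvar : ∃ i : Fin d, w₁.count i = 1 ∧ w₂.count i = 0)
    (g : FreeAlgebra k (Fin d)) :
    (∀ (n : ℕ), 1 ≤ n → ∀ X : Fin d → Matrix (Fin n) (Fin n) k,
        ncEval X (wordElt w₁ - wordElt w₂) = 0 → ncEval X g = 0) ↔
      g ∈ TwoSidedIdeal.span {(wordElt w₁ - wordElt w₂ : FreeAlgebra k (Fin d))} := by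
  classical
  constructor
  · intro H
    obtain ⟨x, hx1, hx2⟩ := hvar
    obtain ⟨a, b, rfl⟩ := List.append_of_mem (List.count_pos_iff.mp (by omega : 0 < w₁.count x))
    have hxc : x ∉ w₂ := List.count_eq_zero.mp hx2
    rw [List.count_append, List.count_cons_self] at hx1
    have hxa : x ∉ a := List.count_eq_zero.mp (by omega)
    have hxb : x ∉ b := List.count_eq_zero.mp (by omega)
    obtain ⟨M, mk, huniv, hfin⟩ := BinNull.core a b w₂ x hne₂ hxa hxb hxc hhead hlast
    obtain ⟨f, rfl⟩ := BinNull.exists_words k d g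
    obtain ⟨n, T, e, hT, hsep⟩ := hfin (f.support.sup List.length)
    have hlen : ∀ u ∈ f.support, u.length ≤ f.support.sup List.length :=
      fun u hu => Finset.le_sup (f := List.length) hu
    set J := TwoSidedIdeal.span
      {(wordElt (a ++ x :: b) - wordElt w₂ : FreeAlgebra k (Fin d))} with hJ
    have hmul : ∀ u v : List (Fin d),
        (wordElt (u ++ v) : FreeAlgebra k (Fin d)) = wordElt u * wordElt v := by
      intro u v; simp [wordElt]
    have hmkJ : ∀ u v, mk u = mk v → (wordElt u - wordElt v : FreeAlgebra k (Fin d)) ∈ J := by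
      intro u v huv
      refine huniv u v huv (fun u v => (wordElt u - wordElt v : FreeAlgebra k (Fin d)) ∈ J)
        ⟨fun u => ?_, fun {u v} h => ?_, fun {u v w} h1 h2 => ?_⟩ ?_
      · rw [sub_self]; exact J.zero_mem
      · have := J.neg_mem h; rwa [neg_sub] at this
      · have := J.add_mem h1 h2; rwa [sub_add_sub_cancel] at this
      · intro p q
        have h0 : (wordElt (a ++ x :: b) - wordElt w₂ : FreeAlgebra k (Fin d)) ∈ J :=
          TwoSidedIdeal.subset_span rfl
        have := J.mul_mem_left (wordElt p) _ (J.mul_mem_right _ (wordElt q) h0)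
        rw [hmul p, hmul p, hmul _ q, hmul _ q, ← mul_sub, ← sub_mul]
        exact this
    have hn : 1 ≤ n := by have := e.2; omega
    have h0 := H n hn (fun y => BinNull.pm k (T y)) (by
      have h1 := BinNull.pm_prod k T (a ++ x :: b)
      have h2 := BinNull.pm_prod k T w₂
      unfold ncEval at h1 h2 ⊢
      rw [map_sub, h1, h2, hT, sub_self])
    have h3 : ∑ u ∈ f.support, f u • BinNull.pm k (u.map T).prod = 0 := by
      rw [← h0]
      simp only [← BinNull.pm_prod]
      unfold ncEval Finsupp.sum
      simp only [map_sum, map_smul]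
    have h4 : ∀ p : Fin n, ∑ u ∈ f.support with (u.map T).prod e = p, f u = 0 := by
      intro p
      have := congrFun (congrFun h3 p) e
      rw [Matrix.sum_apply] at this
      simp only [BinNull.pm, Matrix.smul_apply, Matrix.of_apply, Matrix.zero_apply, smul_eq_mul,
        mul_ite, mul_one, mul_zero] at this
      rw [Finset.sum_filter]
      refine Eq.trans (Finset.sum_congr rfl fun u _ => ?_) this
      by_cases hp : (u.map T).prod e = p
      · rw [if_pos hp, if_pos hp.symm]
      · rw [if_neg hp, if_neg (Ne.symm hp)]
    unfold Finsupp.sum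
    rw [← Finset.sum_fiberwise f.support (fun u => (u.map T).prod e)]
    refine sum_mem fun p _ => ?_
    rcases Finset.eq_empty_or_nonempty {u ∈ f.support | (u.map T).prod e = p} with he | ⟨u₀, hu₀⟩
    · rw [he, Finset.sum_empty]; exact J.zero_mem
    · have h5 : ∑ u ∈ f.support with (u.map T).prod e = p,
          f u • (wordElt u : FreeAlgebra k (Fin d)) =
          ∑ u ∈ f.support with (u.map T).prod e = p,
            f u • (wordElt u - wordElt u₀ : FreeAlgebra k (Fin d)) := by
        simp only [smul_sub, Finset.sum_sub_distrib, ← Finset.sum_smul, h4 p, zero_smul, sub_zero]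
      rw [h5]
      refine sum_mem fun u hu => ?_
      rw [Finset.mem_filter] at hu hu₀
      rw [Algebra.smul_def]
      exact J.mul_mem_left _ _ (hmkJ u u₀
        ((hsep u u₀ (hlen _ hu.1) (hlen _ hu₀.1)).mp (hu.2.trans hu₀.2.symm)))
  · intro hg n _ X hX
    have : TwoSidedIdeal.span {(wordElt w₁ - wordElt w₂ : FreeAlgebra k (Fin d))} ≤
        TwoSidedIdeal.ker (FreeAlgebra.lift k X) := by
      rw [TwoSidedIdeal.span_le]
      rintro _ rfl
      exact (TwoSidedIdeal.mem_ker _).mpr hX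
    exact (TwoSidedIdeal.mem_ker _).mp (this hg)
end

section
/- Let f_1,…,f_ℓ, g ∈ k⟨x_1,…,x_d⟩. Then the following are equivalent: (i) for every n ≥ 1, every X ∈ M_n(k)^d and every vector v ∈ k^n, if f_j(X)v = 0 for all j = 1,…,ℓ then g(X)v = 0; (ii) g belongs to the left ideal of k⟨x_1,…,x_d⟩ generated by f_1,…,f_ℓ. -/
theorem bergman_aux {k : Type*} [Field k] {d ℓ : ℕ}
    (f : Fin ℓ → FreeAlgebra k (Fin d)) (g : FreeAlgebra k (Fin d))
    {M : Type*} [AddCommGroup M] [Module k M] [Module (FreeAlgebra k (Fin d)) M]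
    [IsScalarTower k (FreeAlgebra k (Fin d)) M] (m : M) (hf : ∀ j, f j • m = 0)
    (H : ∀ (n : ℕ), 1 ≤ n → ∀ X : Fin d → Matrix (Fin n) (Fin n) k,
        ∀ v : Fin n → k,
        (∀ j, (ncEval X (f j)).mulVec v = 0) → (ncEval X g).mulVec v = 0) :
    g • m = 0 := by
  classical
  let S : Submodule k (FreeAlgebra k (Fin d)) := Submodule.span k (insert 1 (Set.range (FreeAlgebra.ι k)))
  have hSfg : S.FG := Submodule.fg_span ((Set.finite_range _).insert 1)
  have h1S : (1 : Submodule k (FreeAlgebra k (Fin d))) ≤ S := by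
    rw [Submodule.one_le]
    exact Submodule.subset_span (Set.mem_insert _ _)
  have hmono : ∀ a b : ℕ, a ≤ b → S ^ a ≤ S ^ b := by
    intro a b hab
    obtain ⟨c, rfl⟩ := Nat.exists_eq_add_of_le hab
    have h1c : (1 : Submodule k (FreeAlgebra k (Fin d))) ≤ S ^ c := by
      induction c with
      | zero => simp
      | succ c ih =>
        rw [pow_succ]
        calc (1 : Submodule k (FreeAlgebra k (Fin d))) = 1 * 1 := by simp
          _ ≤ _ := mul_le_mul' (ih (by omega)) h1S
    rw [pow_add]
    calc S ^ a = S ^ a * 1 := by simp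
      _ ≤ _ := mul_le_mul' le_rfl h1c
  have hex : ∀ p : (FreeAlgebra k (Fin d)), ∃ n, p ∈ S ^ n := by
    intro p
    induction p using FreeAlgebra.induction with
    | grade0 r => exact ⟨0, by rw [pow_zero]; exact Submodule.algebraMap_mem r⟩
    | grade1 x =>
      exact ⟨1, by rw [pow_one]; exact Submodule.subset_span (Set.mem_insert_of_mem _ ⟨x, rfl⟩)⟩
    | mul a b ha hb =>
      obtain ⟨i, hi⟩ := ha
      obtain ⟨j, hj⟩ := hb
      exact ⟨i + j, by rw [pow_add]; exact Submodule.mul_mem_mul hi hj⟩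
    | add a b ha hb =>
      obtain ⟨i, hi⟩ := ha
      obtain ⟨j, hj⟩ := hb
      exact ⟨i + j, add_mem (hmono _ _ (by omega) hi) (hmono _ _ (by omega) hj)⟩
  choose deg hdeg using hex
  let N := deg g + ∑ j, deg (f j)
  have hgN : g ∈ S ^ N := hmono _ _ (by omega) (hdeg g)
  have hfN : ∀ j, f j ∈ S ^ N := fun j => hmono _ _ (by
    have := Finset.single_le_sum (f := fun j => deg (f j)) (fun _ _ => Nat.zero_le _)
      (Finset.mem_univ j)
    omega) (hdeg (f j))
  let φ : (FreeAlgebra k (Fin d)) →ₗ[k] M := (LinearMap.toSpanSingleton (FreeAlgebra k (Fin d)) M m).restrictScalars k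
  have hφ : ∀ a, φ a = a • m := fun a => rfl
  let V : Submodule k M := (S ^ N).map φ
  have hVfg : V.FG := (hSfg.pow N).map φ
  have : Module.Finite k V := Module.Finite.iff_fg.mpr hVfg
  have hmemV : ∀ p ∈ S ^ N, p • m ∈ V := fun p hp => ⟨p, hp, rfl⟩
  obtain ⟨P, hP'⟩ := V.subtype.exists_leftInverse_of_injective (by simp)
  have hP : ∀ v : V, P (v : M) = v := fun v => DFunLike.congr_fun hP' v
  let T : Fin d → Module.End k V := fun i =>
    P ∘ₗ (Algebra.lsmul k k M (FreeAlgebra.ι k i)) ∘ₗ V.subtype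
  have hT : ∀ i (v : V) (h : FreeAlgebra.ι k i • (v : M) ∈ V), T i v = ⟨_, h⟩ := by
    intro i v h
    exact hP ⟨_, h⟩
  have h1N : (1 : (FreeAlgebra k (Fin d))) ∈ S ^ N := hmono 0 N (by omega) (by simp)
  let v₀ : V := ⟨m, by simpa using hmemV 1 h1N⟩
  let L := FreeAlgebra.lift k T
  have key : ∀ n, n ≤ N → ∀ p ∈ S ^ n, ((L p v₀ : V) : M) = p • m := by
    intro n
    induction n with
    | zero =>
      intro _ p hp
      rw [pow_zero, Submodule.mem_one] at hp
      obtain ⟨r, rfl⟩ := hp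
      simp [L, v₀]
    | succ n ih =>
      intro hn p hp
      rw [pow_succ'] at hp
      induction hp using Submodule.mul_induction_on' with
      | mem_mul_mem s hs q hq =>
        have hq' := ih (by omega) q hq
        rw [map_mul, Module.End.mul_apply, mul_smul, ← hq']
        have hsV : ∀ t ∈ S, t • ((L q v₀ : V) : M) ∈ V := by
          intro t ht
          rw [hq', ← mul_smul]
          refine hmemV _ (hmono (n+1) N hn ?_)
          rw [pow_succ']
          exact Submodule.mul_mem_mul ht hq
        induction hs using Submodule.span_induction with
        | mem x hx =>
          rcases hx with rfl | ⟨i, rfl⟩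
          · simp
          · have := hT i (L q v₀) (hsV _ (Submodule.subset_span (Set.mem_insert_of_mem _ ⟨i, rfl⟩)))
            simp only [L, FreeAlgebra.lift_ι_apply]
            simp only [L] at this
            rw [this]
        | zero => simp
        | add x y _ _ hx hy => simp [add_smul, hx, hy]
        | smul c x _ hx => simp [hx]
      | add x _ y _ hx hy => simp [add_smul, hx, hy]
  by_cases hn : 1 ≤ Module.finrank k V
  · let b := Module.finBasis k V
    let X := fun i => LinearMap.toMatrixAlgEquiv b (T i)
    have hX : ∀ p, ncEval X p = LinearMap.toMatrixAlgEquiv b (L p) := by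
      intro p
      have : FreeAlgebra.lift k X =
          (LinearMap.toMatrixAlgEquiv b).toAlgHom.comp (FreeAlgebra.lift k T) := by
        ext i : 2
        simp [X]
      exact DFunLike.congr_fun this p
    have hXv : ∀ p, (ncEval X p).mulVec (b.repr v₀) = b.repr (L p v₀) := by
      intro p
      rw [hX]
      exact LinearMap.toMatrix_mulVec_repr b b (L p) v₀
    have := H _ hn X (b.repr v₀) (fun j => by
      rw [hXv]
      have : L (f j) v₀ = 0 := Subtype.ext (by rw [key N le_rfl _ (hfN j), hf j]; rfl)
      rw [this]; simp)
    rw [hXv] at this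
    have h0 : L g v₀ = 0 := b.repr.injective (by ext i; simpa using congrFun this i)
    rw [← key N le_rfl g hgN, h0]; rfl
  · have h0 : Module.finrank k V = 0 := by omega
    have := Module.finrank_zero_iff.mp h0
    exact congrArg Subtype.val (Subsingleton.elim (⟨_, hmemV g hgN⟩ : V) 0)

/-- Bergman's Nullstellensatz: `g` vanishes on all directional zeros of
`f_1, …, f_ℓ` if and only if `g` lies in the left ideal generated by `f_1, …, f_ℓ`. -/
theorem bergman_nullstellensatz
    (k : Type*) [Field k] [IsAlgClosed k] [CharZero k]
    (d ℓ : ℕ) (hd : 1 ≤ d)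
    (f : Fin ℓ → FreeAlgebra k (Fin d)) (g : FreeAlgebra k (Fin d)) :
    (∀ (n : ℕ), 1 ≤ n → ∀ X : Fin d → Matrix (Fin n) (Fin n) k,
        ∀ v : Fin n → k,
        (∀ j, (ncEval X (f j)).mulVec v = 0) → (ncEval X g).mulVec v = 0) ↔
      g ∈ Ideal.span (Set.range f) := by
  constructor
  · intro H
    have h := bergman_aux f g
      (M := FreeAlgebra k (Fin d) ⧸ (show Submodule (FreeAlgebra k (Fin d)) (FreeAlgebra k (Fin d))
        from Ideal.span (Set.range f)))
      (Submodule.Quotient.mk 1) (fun j => by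
        rw [← Submodule.Quotient.mk_smul, Submodule.Quotient.mk_eq_zero, smul_eq_mul, mul_one]
        exact Ideal.subset_span ⟨j, rfl⟩) H
    rw [← Submodule.Quotient.mk_smul, Submodule.Quotient.mk_eq_zero, smul_eq_mul, mul_one] at h
    exact h
  · intro hg n _ X v hv
    induction hg using Submodule.span_induction with
    | mem x hx => obtain ⟨j, rfl⟩ := hx; exact hv j
    | zero => simp [ncEval]
    | add x y _ _ hx hy =>
      simp only [ncEval, map_add, Matrix.add_mulVec] at *
      rw [hx, hy, add_zero]
    | smul a x _ hx =>
      simp only [ncEval, smul_eq_mul, map_mul, ← Matrix.mulVec_mulVec] at *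
      rw [hx, Matrix.mulVec_zero]
end

section
/- Let f, g ∈ k⟨x_1,…,x_d⟩. Then g belongs to the unital subalgebra k[f] of k⟨x_1,…,x_d⟩ generated by f if and only if for every n ≥ 1, every X ∈ M_n(k)^d, every λ ∈ k and every nonzero v ∈ k^n with f(X)v = λv, there exists μ ∈ k with g(X)v = μv (i.e. every eigenvector of f(X) is an eigenvector of g(X)). -/
open Polynomial in
/-- Homogenisation: send each variable `x` to `x * t`, with `t` central. -/
noncomputable def ncHom (k : Type*) [Field k] (d : ℕ) :
    FreeAlgebra k (Fin d) →ₐ[k] Polynomial (FreeAlgebra k (Fin d)) :=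
  FreeAlgebra.lift k (fun i => C (FreeAlgebra.ι k i) * X)

lemma ncHom_eval_one {k : Type*} [Field k] {d : ℕ} (p : FreeAlgebra k (Fin d)) :
    Polynomial.eval₂RingHom' (RingHom.id (FreeAlgebra k (Fin d))) 1
      (fun a => Commute.one_right _) (ncHom k d p) = p := by
  induction p using FreeAlgebra.induction with
  | grade0 r => simp [Polynomial.algebraMap_apply, Polynomial.eval₂RingHom']
  | grade1 x => simp [ncHom, Polynomial.eval₂RingHom']
  | mul a b ha hb => rw [map_mul, map_mul, ha, hb]
  | add a b ha hb => rw [map_add, map_add, ha, hb]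

lemma ncHom_eval_zero {k : Type*} [Field k] {d : ℕ} (p : FreeAlgebra k (Fin d)) :
    ∃ r : k, Polynomial.eval₂RingHom' (RingHom.id (FreeAlgebra k (Fin d))) 0
      (fun a => Commute.zero_right _) (ncHom k d p) = algebraMap k _ r := by
  induction p using FreeAlgebra.induction with
  | grade0 r => exact ⟨r, by simp [Polynomial.algebraMap_apply, Polynomial.eval₂RingHom']⟩
  | grade1 x => exact ⟨0, by simp [ncHom, Polynomial.eval₂RingHom']⟩
  | mul a b ha hb =>
    obtain ⟨r, hr⟩ := ha
    obtain ⟨s, hs⟩ := hb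
    exact ⟨r * s, by rw [map_mul, map_mul, hr, hs, map_mul]⟩
  | add a b ha hb =>
    obtain ⟨r, hr⟩ := ha
    obtain ⟨s, hs⟩ := hb
    exact ⟨r + s, by rw [map_add, map_add, hr, hs, map_add]⟩

/-- Degree of a noncommutative polynomial. -/
noncomputable def ncDeg {k : Type*} [Field k] {d : ℕ} (p : FreeAlgebra k (Fin d)) : ℕ :=
  (ncHom k d p).natDegree

lemma ncDeg_eq_zero {k : Type*} [Field k] {d : ℕ} {p : FreeAlgebra k (Fin d)}
    (hp : ncDeg p = 0) : ∃ r : k, p = algebraMap k _ r := by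
  obtain ⟨a, ha⟩ := Polynomial.natDegree_eq_zero.mp hp
  have h1 := ncHom_eval_one p
  obtain ⟨r, h0⟩ := ncHom_eval_zero p
  rw [← ha] at h1 h0
  simp [Polynomial.eval₂RingHom'] at h1 h0
  exact ⟨r, by rw [← h1, h0]⟩

lemma ncHom_ne_zero {k : Type*} [Field k] {d : ℕ} {p : FreeAlgebra k (Fin d)}
    (hp : p ≠ 0) : ncHom k d p ≠ 0 := by
  intro h
  have h1 := ncHom_eval_one p
  rw [h, map_zero] at h1
  exact hp h1.symm

lemma ncDeg_mul {k : Type*} [Field k] {d : ℕ} {p q : FreeAlgebra k (Fin d)}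
    (hp : p ≠ 0) (hq : q ≠ 0) : ncDeg (p * q) = ncDeg p + ncDeg q := by
  unfold ncDeg
  rw [map_mul, Polynomial.natDegree_mul (ncHom_ne_zero hp) (ncHom_ne_zero hq)]

lemma ncDeg_sub_algebraMap {k : Type*} [Field k] {d : ℕ} (p : FreeAlgebra k (Fin d)) (r : k) :
    ncDeg (p - algebraMap k _ r) = ncDeg p := by
  unfold ncDeg
  rw [map_sub, AlgHom.commutes, Polynomial.algebraMap_apply, Polynomial.natDegree_sub_C]

/-- The algebraic part: if `g` is a constant modulo the left ideal of `f - lam` for all but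
finitely many `lam`, then `g` is a polynomial in `f`. -/
lemma mem_adjoin_of_forall {k : Type*} [Field k] [Infinite k] {d : ℕ}
    (f : FreeAlgebra k (Fin d)) (hf : ∀ r : k, f ≠ algebraMap k _ r) (N : ℕ) :
    ∀ (g : FreeAlgebra k (Fin d)) (S : Finset k), ncDeg g ≤ N →
      (∀ lam : k, lam ∉ S → ∃ (mu : k) (h : FreeAlgebra k (Fin d)),
        g = algebraMap k _ mu + h * (f - algebraMap k _ lam)) →
      g ∈ Algebra.adjoin k ({f} : Set (FreeAlgebra k (Fin d))) := by
  classical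
  have hpos : 0 < ncDeg f := Nat.pos_of_ne_zero fun h => by
    obtain ⟨r, hr⟩ := ncDeg_eq_zero h
    exact hf r hr
  have hfA : f ∈ Algebra.adjoin k ({f} : Set (FreeAlgebra k (Fin d))) :=
    Algebra.subset_adjoin rfl
  induction N using Nat.strong_induction_on with
  | _ N ih =>
  intro g S hg hS
  obtain ⟨l0, hl0⟩ := Infinite.exists_notMem_finset S
  obtain ⟨m0, h, e⟩ := hS l0 hl0
  rw [e]
  refine add_mem (Subalgebra.algebraMap_mem _ _)
    (mul_mem ?_ (sub_mem hfA (Subalgebra.algebraMap_mem _ _)))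
  by_cases h0 : h = 0
  · rw [h0]; exact zero_mem _
  have hlt : ncDeg h < N := by
    have e' : g - algebraMap k _ m0 = h * (f - algebraMap k _ l0) := by rw [e]; abel
    have := ncDeg_sub_algebraMap g m0
    rw [e', ncDeg_mul h0 (sub_ne_zero.mpr (hf l0)), ncDeg_sub_algebraMap] at this
    omega
  refine ih _ hlt h (insert l0 S) le_rfl ?_
  intro lam hlam
  rw [Finset.mem_insert, not_or] at hlam
  obtain ⟨m1, h', e1⟩ := hS lam hlam.2
  have hne : lam - l0 ≠ 0 := sub_ne_zero.mpr hlam.1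
  refine ⟨(lam - l0)⁻¹ * (m1 - m0), (lam - l0)⁻¹ • (h' - h), ?_⟩
  have key : (lam - l0) • h = algebraMap k _ (m1 - m0)
      + (h' - h) * (f - algebraMap k _ lam) := by
    rw [e] at e1
    have e2 : h * (f - algebraMap k _ l0) =
        h * (f - algebraMap k _ lam) + (lam - l0) • h := by
      rw [Algebra.smul_def, Algebra.commutes, ← mul_add, map_sub]
      congr 1
      abel
    rw [e2] at e1
    rw [map_sub, sub_mul, ← sub_eq_zero]
    rw [← sub_eq_zero] at e1
    rw [← e1]
    abel
  calc h = (lam - l0)⁻¹ • ((lam - l0) • h) := by rw [smul_smul, inv_mul_cancel₀ hne, one_smul]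
    _ = _ := by
      rw [key, smul_add, ← smul_mul_assoc, map_mul, ← Algebra.smul_def]

/-- Any finite set of noncommutative polynomials acts on a cyclic vector of a module
as on a vector of a finite-dimensional representation. -/
lemma eigen_module {k : Type*} [Field k] {d : ℕ} {f g : FreeAlgebra k (Fin d)}
    (H : ∀ (n : ℕ), 1 ≤ n → ∀ X : Fin d → Matrix (Fin n) (Fin n) k,
        ∀ (lam : k) (v : Fin n → k), v ≠ 0 → (ncEval X f).mulVec v = lam • v →
        ∃ mu : k, (ncEval X g).mulVec v = mu • v)
    {M : Type*} [AddCommGroup M] [Module k M] [Module (FreeAlgebra k (Fin d)) M]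
    [IsScalarTower k (FreeAlgebra k (Fin d)) M] (m : M) (hm : m ≠ 0) (lam : k)
    (hlam : f • m = lam • m) : ∃ mu : k, g • m = mu • m := by
  classical
  let F : Submodule k (FreeAlgebra k (Fin d)) :=
    Submodule.span k (insert 1 (Set.range (FreeAlgebra.ι k)))
  have hF1 : (1 : FreeAlgebra k (Fin d)) ∈ F := Submodule.subset_span (Set.mem_insert _ _)
  have hFfg : F.FG := Submodule.fg_span ((Set.finite_range _).insert _)
  have h1 : (1 : Submodule k (FreeAlgebra k (Fin d))) ≤ F := Submodule.one_le.mpr hF1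
  have hmono : ∀ {a b : ℕ}, a ≤ b → F ^ a ≤ F ^ b := fun h => pow_le_pow_right' h1 h
  have hex : ∀ p : FreeAlgebra k (Fin d), ∃ N, p ∈ F ^ N := by
    intro p
    induction p using FreeAlgebra.induction with
    | grade0 r => exact ⟨0, by rw [pow_zero]; exact Submodule.algebraMap_mem r⟩
    | grade1 x => exact ⟨1, by
        rw [pow_one]; exact Submodule.subset_span (Set.mem_insert_of_mem _ ⟨x, rfl⟩)⟩
    | mul a b ha hb =>
      obtain ⟨r, hr⟩ := ha
      obtain ⟨s, hs⟩ := hb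
      exact ⟨r + s, by rw [pow_add]; exact Submodule.mul_mem_mul hr hs⟩
    | add a b ha hb =>
      obtain ⟨r, hr⟩ := ha
      obtain ⟨s, hs⟩ := hb
      exact ⟨max r s, add_mem (hmono (le_max_left _ _) hr) (hmono (le_max_right _ _) hs)⟩
  obtain ⟨Nf, hNf⟩ := hex f
  obtain ⟨Ng, hNg⟩ := hex g
  let N := max Nf Ng
  let π : FreeAlgebra k (Fin d) →ₗ[k] M :=
    (LinearMap.toSpanSingleton (FreeAlgebra k (Fin d)) M m).restrictScalars k
  have hπ : ∀ p, π p = p • m := fun p => rfl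
  let V : Submodule k M := (F ^ N).map π
  have hVfg : V.FG := (hFfg.pow N).map π
  haveI : Module.Finite k V := Module.Finite.iff_fg.mpr hVfg
  obtain ⟨P, hP⟩ := V.subtype.exists_leftInverse_of_injective V.ker_subtype
  have hP' : ∀ (x : M) (hx : x ∈ V), P x = ⟨x, hx⟩ := fun x hx =>
    LinearMap.congr_fun hP ⟨x, hx⟩
  have hmem : ∀ {n p}, n ≤ N → p ∈ F ^ n → p • m ∈ V := fun hn hp =>
    ⟨_, hmono hn hp, rfl⟩
  have hmV : m ∈ V := by
    have : (1 : FreeAlgebra k (Fin d)) • m ∈ V :=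
      hmem (Nat.zero_le N) (by rw [pow_zero]; exact Submodule.one_le.mp le_rfl)
    rwa [one_smul] at this
  let T : Fin d → Module.End k V := fun i =>
    P ∘ₗ (Algebra.lsmul k k M (FreeAlgebra.ι k i)) ∘ₗ V.subtype
  let m' : V := ⟨m, hmV⟩
  have hact : ∀ n p, n ≤ N → p ∈ F ^ n →
      ((FreeAlgebra.lift k T p m' : V) : M) = p • m := by
    intro n
    induction n with
    | zero =>
      intro p _ hp
      rw [pow_zero, Submodule.mem_one] at hp
      obtain ⟨r, rfl⟩ := hp
      rw [AlgHom.commutes, Module.algebraMap_end_apply, algebraMap_smul]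
      rfl
    | succ n ih =>
      intro p hn hp
      rw [pow_succ'] at hp
      have hle : F * F ^ n ≤ LinearMap.eqLocus
          (V.subtype ∘ₗ (LinearMap.applyₗ m') ∘ₗ (FreeAlgebra.lift k T).toLinearMap) π := by
        rw [show F * F ^ n = Submodule.span k (insert 1 (Set.range (FreeAlgebra.ι k))) *
            Submodule.span k ((F ^ n : Submodule k _) : Set (FreeAlgebra k (Fin d))) by
          rw [Submodule.span_eq (F ^ n)], Submodule.span_mul_span, Submodule.span_le]
        rintro _ ⟨a, ha, q, hq, rfl⟩
        have hq' := ih q (by omega) hq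
        change ((FreeAlgebra.lift k T (a * q) m' : V) : M) = (a * q) • m
        rcases ha with rfl | ⟨i, rfl⟩
        · rw [one_mul, hq']
        · have hm2 : (FreeAlgebra.ι k i * q) • m ∈ V := hmem hn (by
            rw [pow_succ']
            exact Submodule.mul_mem_mul
              (Submodule.subset_span (Set.mem_insert_of_mem _ ⟨i, rfl⟩)) hq)
          rw [map_mul, FreeAlgebra.lift_ι_apply, Module.End.mul_apply]
          change ((P (FreeAlgebra.ι k i • ((FreeAlgebra.lift k T q m' : V) : M)) : V) : M) = _
          rw [hq', ← mul_smul, hP' _ hm2]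
      exact hle hp
  let b := Module.finBasis k V
  let X : Fin d → Matrix (Fin (Module.finrank k V)) (Fin (Module.finrank k V)) k :=
    fun i => LinearMap.toMatrixAlgEquiv b (T i)
  have hX : ∀ p, ncEval X p = LinearMap.toMatrixAlgEquiv b (FreeAlgebra.lift k T p) := by
    intro p
    have : FreeAlgebra.lift k X =
        (LinearMap.toMatrixAlgEquiv b).toAlgHom.comp (FreeAlgebra.lift k T) := by
      ext i : 2
      simp [X]
    exact DFunLike.congr_fun this p
  have hmul : ∀ p, (ncEval X p).mulVec (b.repr m') = b.repr (FreeAlgebra.lift k T p m') := by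
    intro p
    rw [hX]
    exact LinearMap.toMatrix_mulVec_repr b b _ _
  have hm' : m' ≠ 0 := fun h => hm (congrArg Subtype.val h)
  haveI : Nontrivial V := ⟨m', 0, hm'⟩
  have hfm : FreeAlgebra.lift k T f m' = lam • m' := Subtype.ext (by
    rw [hact Nf f (le_max_left _ _) hNf, hlam]; rfl)
  obtain ⟨mu, hmu⟩ := H _ Module.finrank_pos X lam (b.repr m')
    (fun h => hm' (b.repr.injective (DFunLike.coe_injective (by rw [h, map_zero]; rfl))))
    (by rw [hmul, hfm, map_smul]; rfl)
  refine ⟨mu, ?_⟩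
  have hgm : FreeAlgebra.lift k T g m' = mu • m' := by
    apply b.repr.injective
    apply DFunLike.coe_injective
    rw [← hmul, hmu, map_smul]; rfl
  rw [← hact Ng g (le_max_right _ _) hNg, hgm]
  rfl

/-- Left ideal version of the previous lemma. -/
lemma eigen_ideal {k : Type*} [Field k] {d : ℕ} {f g : FreeAlgebra k (Fin d)}
    (H : ∀ (n : ℕ), 1 ≤ n → ∀ X : Fin d → Matrix (Fin n) (Fin n) k,
        ∀ (lam : k) (v : Fin n → k), v ≠ 0 → (ncEval X f).mulVec v = lam • v →
        ∃ mu : k, (ncEval X g).mulVec v = mu • v) (lam : k)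
    (h1 : ∀ h : FreeAlgebra k (Fin d), h * (f - algebraMap k _ lam) ≠ 1) :
    ∃ (mu : k) (h : FreeAlgebra k (Fin d)),
        g = algebraMap k _ mu + h * (f - algebraMap k _ lam) := by
  let I : Submodule (FreeAlgebra k (Fin d)) (FreeAlgebra k (Fin d)) :=
    Submodule.span _ {f - algebraMap k _ lam}
  have hI : ∀ p, p ∈ I ↔ ∃ h, h * (f - algebraMap k _ lam) = p := fun p =>
    Submodule.mem_span_singleton
  have hsm : ∀ (p : FreeAlgebra k (Fin d)) (r : k),
      p • (Submodule.Quotient.mk 1 : FreeAlgebra k (Fin d) ⧸ I) =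
        r • (Submodule.Quotient.mk 1 : FreeAlgebra k (Fin d) ⧸ I) ↔
      p - algebraMap k _ r ∈ I := by
    intro p r
    rw [← Submodule.Quotient.mk_smul, ← Submodule.Quotient.mk_smul, Submodule.Quotient.eq,
      smul_eq_mul, mul_one, Algebra.smul_def, mul_one]
  obtain ⟨mu, hmu⟩ := eigen_module H (Submodule.Quotient.mk 1 : FreeAlgebra k (Fin d) ⧸ I)
    (by
      rw [Ne, Submodule.Quotient.mk_eq_zero, hI]
      rintro ⟨h, hh⟩
      exact h1 h hh) lam
    ((hsm f lam).mpr ((hI _).mpr ⟨1, one_mul _⟩))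
  obtain ⟨h, hh⟩ := (hI _).mp ((hsm g mu).mp hmu)
  exact ⟨mu, h, by rw [hh]; abel⟩

/-- `g` is a polynomial in `f` (i.e. `g ∈ k[f]`) if and only if at every matrix
tuple `X` every eigenvector of `f(X)` is an eigenvector of `g(X)`. -/
theorem eigenvector_nullstellensatz
    (k : Type*) [Field k] [IsAlgClosed k] [CharZero k]
    (d : ℕ) (hd : 1 ≤ d) (f g : FreeAlgebra k (Fin d)) :
    g ∈ Algebra.adjoin k ({f} : Set (FreeAlgebra k (Fin d))) ↔
      (∀ (n : ℕ), 1 ≤ n → ∀ X : Fin d → Matrix (Fin n) (Fin n) k,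
        ∀ (lam : k) (v : Fin n → k), v ≠ 0 → (ncEval X f).mulVec v = lam • v →
        ∃ mu : k, (ncEval X g).mulVec v = mu • v) := by
  constructor
  · intro hg n _ X lam v _ hv
    induction hg using Algebra.adjoin_induction with
    | mem x hx =>
      rw [Set.mem_singleton_iff] at hx
      subst hx
      exact ⟨lam, hv⟩
    | algebraMap r =>
      refine ⟨r, ?_⟩
      unfold ncEval
      rw [AlgHom.commutes, Algebra.algebraMap_eq_smul_one, Matrix.smul_mulVec, Matrix.one_mulVec]
    | add x y _ _ hx hy =>
      obtain ⟨a, ha⟩ := hx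
      obtain ⟨b, hb⟩ := hy
      refine ⟨a + b, ?_⟩
      unfold ncEval at *
      rw [map_add, Matrix.add_mulVec, ha, hb, add_smul]
    | mul x y _ _ hx hy =>
      obtain ⟨a, ha⟩ := hx
      obtain ⟨b, hb⟩ := hy
      refine ⟨b * a, ?_⟩
      unfold ncEval at *
      rw [map_mul, ← Matrix.mulVec_mulVec, hb, Matrix.mulVec_smul, ha, mul_smul]
  · intro H
    by_cases hf : ∃ r : k, f = algebraMap k _ r
    · obtain ⟨r, hr⟩ := hf
      obtain ⟨mu, h, e⟩ := eigen_ideal H r (fun h => by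
        rw [hr, sub_self, mul_zero]; exact zero_ne_one)
      rw [e, hr, sub_self, mul_zero, add_zero]
      exact Subalgebra.algebraMap_mem _ _
    · push Not at hf
      refine mem_adjoin_of_forall f hf _ g ∅ le_rfl ?_
      intro lam _
      refine eigen_ideal H lam ?_
      intro h hh
      have h0 : h ≠ 0 := by
        rintro rfl
        rw [zero_mul] at hh
        exact zero_ne_one hh
      have e := ncDeg_mul h0 (sub_ne_zero.mpr (hf lam))
      rw [hh, ncDeg_sub_algebraMap] at e
      have e1 : ncDeg (1 : FreeAlgebra k (Fin d)) = 0 := by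
        unfold ncDeg
        rw [map_one, Polynomial.natDegree_one]
      obtain ⟨r, hr⟩ := ncDeg_eq_zero (p := f) (by omega)
      exact hf r hr
end
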